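/- In the presented group G, the subgroup E = ⟨a, c, e, g, h, u, v, w, x, y, t⟩ has cardinality 2^17·3^2·5·7·11 = 454164480 (E is the subgroup 2¹⁰:M₂₂ of Fi₂₂). -/

import Mathlib

namespace Fi22PS

/-! Free generators of the free group on nine letters, corresponding to
`a, b, c, d, e, f, g, h, i`. -/

def A : FreeGroup (Fin 9) := FreeGroup.of 0
def B : FreeGroup (Fin 9) := FreeGroup.of 1
def C : FreeGroup (Fin 9) := FreeGroup.of 2
def D : FreeGroup (Fin 9) := FreeGroup.of 3
def E : FreeGroup (Fin 9) := FreeGroup.of 4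
def F : FreeGroup (Fin 9) := FreeGroup.of 5
def G : FreeGroup (Fin 9) := FreeGroup.of 6
def H : FreeGroup (Fin 9) := FreeGroup.of 7
def I : FreeGroup (Fin 9) := FreeGroup.of 8

/-- The relator set `R` of the Praeger–Soicher presentation of Fischer's group `Fi₂₂`. -/
def rels : Set (FreeGroup (Fin 9)) :=
  {A ^ 2, B ^ 2, C ^ 2, D ^ 2, E ^ 2, F ^ 2, G ^ 2, H ^ 2, I ^ 2,
   (A * B) ^ 3,
   (B * C) ^ 3, (C * D) ^ 3, (D * E) ^ 3, (E * F) ^ 3, (F * G) ^ 3,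
   (A * C) ^ 2, (A * D) ^ 2, (A * E) ^ 2, (A * F) ^ 2, (A * G) ^ 2, (A * H) ^ 2, (A * I) ^ 2,
   (B * D) ^ 2, (B * E) ^ 2, (B * F) ^ 2, (B * G) ^ 2, (B * H) ^ 2, (B * I) ^ 2,
   (C * E) ^ 2, (C * F) ^ 2, (C * G) ^ 2, (C * H) ^ 2, (C * I) ^ 2,
   (D * F) ^ 2, (D * G) ^ 2, (E * G) ^ 2, (E * H) ^ 2, (E * I) ^ 2,
   (D * H) ^ 3, (H * I) ^ 3,
   (D * I) ^ 2, (F * H) ^ 2, (F * I) ^ 2, (G * H) ^ 2, (G * I) ^ 2,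
   (D * C * B * D * E * F * D * H * I) ^ 10,
   (A * B * C * D * E * F * H) ^ 9, (B * C * D * E * F * G * H) ^ 9}

/-- The presented group `G = ⟨a,b,c,d,e,f,g,h,i ∣ R⟩` (the Praeger–Soicher presentation
of Fischer's group `Fi₂₂`). -/
abbrev Gp := PresentedGroup rels

/-! The images of the nine generators in `G`. -/

def a : Gp := PresentedGroup.of 0
def b : Gp := PresentedGroup.of 1
def c : Gp := PresentedGroup.of 2
def d : Gp := PresentedGroup.of 3
def e : Gp := PresentedGroup.of 4
def f : Gp := PresentedGroup.of 5
def g : Gp := PresentedGroup.of 6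
def h : Gp := PresentedGroup.of 7
def i : Gp := PresentedGroup.of 8


/-! The words `u = bacb`, `v = dced`, `w = dehd`, `x = fegf`, `y = dchd`, `t = (cdehi)⁴`
in `G`. -/

def u : Gp := b * a * c * b
def v : Gp := d * c * e * d
def w : Gp := d * e * h * d
def x : Gp := f * e * g * f
def y : Gp := d * c * h * d
def t : Gp := (c * d * e * h * i) ^ 4

/-- The subgroup `E = ⟨a, c, e, g, h, u, v, w, x, y, t⟩` of `G` (the subgroup
`2¹⁰:M₂₂` of `Fi₂₂`). -/
def Esub : Subgroup Gp := Subgroup.closure {a, c, e, g, h, u, v, w, x, y, t}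

end Fi22PS

/-!
The elements `u`, `v`, `w`, `x` and three more words in the generators permute 22 conjugates of `a`,
the points, in the way in which `M₂₂` permutes the points of the Steiner system `S(3, 6, 22)`. By
the Coxeter relations the points commute, and the two relators `(abcdefh)⁹` and `(bcdefgh)⁹` turn
into products of seven points, so that the points generate a group of order at most `2 ^ 10`. Coset
enumeration modulo this group bounds the index by `330 * 8 * 7 * 24 = 443520`.

Conversely, the action is three times transitive if the points are distinct, and the orbits of a
chain of stabilizers give the factor `22 * 21 * 20 * 16 * 3 = 443520`. An element that permutes the
points with order `11` acts nontrivially on the group of the points, whose order is then at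
least `2 ^ 10` since `2` has order `10` modulo `11`. It remains to see that the points are distinct,
for which `a ≠ c` suffices: in the representation of the triple cover of `Fi₂₂` of dimension 27 over
the field with four elements, `a * c` is not scalar. Most of the generators permute the lines on a
cubic surface there, up to scalars.
-/

namespace Fi22E

section Words

variable {ι Γ : Type*} [Group Γ] (s : ι → Γ)

/-- The element of `Γ` spelled by a word in letters evaluated by `s`. -/
def wordProd (z : List ι) : Γ := (z.map s).prod

@[simp] theorem wordProd_nil : wordProd s [] = 1 := rfl

@[simp] theorem wordProd_cons (l : ι) (z : List ι) :
    wordProd s (l :: z) = s l * wordProd s z := by simp [wordProd]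

@[simp] theorem wordProd_append (y z : List ι) :
    wordProd s (y ++ z) = wordProd s y * wordProd s z := by simp [wordProd]

theorem wordProd_flatten_replicate (n : ℕ) (z : List ι) :
    wordProd s (List.replicate n z).flatten = wordProd s z ^ n := by
  induction n with
  | zero => simp
  | succ n ih => rw [List.replicate_succ, List.flatten_cons, wordProd_append, ih, pow_succ']

theorem wordProd_flatMap {κ : Type*} (L : κ → List ι) (z : List κ) :
    wordProd s (z.flatMap L) = wordProd (fun k ↦ wordProd s (L k)) z := by
  induction z with
  | nil => rfl
  | cons k z ih => simp [ih]

theorem map_wordProd {Δ : Type*} [Group Δ] (φ : Γ →* Δ) (z : List ι) :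
    φ (wordProd s z) = wordProd (fun l ↦ φ (s l)) z := by
  induction z with
  | nil => simp
  | cons l z ih => simp [ih]

theorem wordProd_mem {H : Subgroup Γ} {z : List ι} (h : ∀ l ∈ z, s l ∈ H) : wordProd s z ∈ H :=
  H.list_prod_mem (by simpa using h)

variable {s}

theorem wordProd_reverse (hs : ∀ l, s l * s l = 1) (z : List ι) :
    wordProd s z.reverse = (wordProd s z)⁻¹ := by
  induction z with
  | nil => simp
  | cons l z ih => simp [ih, inv_eq_of_mul_eq_one_left (hs l)]

end Words

section Coxeter

/-- If `toFront adj n z r = some z'`, then the word `z` can be rewritten to `r :: z'` by braid moves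
of the simply laced Coxeter diagram `adj`; `n` bounds the recursion. -/
def toFront (adj : ℕ → ℕ → Bool) : ℕ → List ℕ → ℕ → Option (List ℕ)
  | 0, _, _ => none
  | _ + 1, [], _ => none
  | n + 1, l :: z, r =>
    bif Nat.beq l r then some z else
      match toFront adj n z r with
      | none => none
      | some z₁ =>
        bif adj l r then
          match toFront adj n z₁ l with
          | none => none
          | some z₂ => some (l :: r :: z₂)
        else some (l :: z₁)

/-- Normalise a word by multiplying its letters one by one from the right, cancelling a letter as
soon as braid moves bring it next to its copy. The recursion bound `400` exceeds the length of all
words that occur. -/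
def coxeterReduce (adj : ℕ → ℕ → Bool) : List ℕ → List ℕ
  | [] => []
  | l :: z =>
    match toFront adj 400 (coxeterReduce adj z) l with
    | none => l :: coxeterReduce adj z
    | some z' => z'

/-- The involutions `s` satisfy the relations of the simply laced Coxeter diagram `adj`. -/
structure IsCoxeterFamily {Γ : Type*} [Group Γ] (adj : ℕ → ℕ → Bool) (s : ℕ → Γ) : Prop where
  mul_self : ∀ l, s l * s l = 1
  comm : ∀ l r, adj l r = false → s l * s r = s r * s l
  braid : ∀ l r, adj l r = true → s l * s r * s l = s r * s l * s r

variable {Γ : Type*} [Group Γ] {adj : ℕ → ℕ → Bool} {s : ℕ → Γ}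

theorem IsCoxeterFamily.wordProd_of_toFront (hs : IsCoxeterFamily adj s) (n : ℕ) :
    ∀ (z : List ℕ) (r : ℕ) (z' : List ℕ), toFront adj n z r = some z' →
      wordProd s z = s r * wordProd s z' := by
  induction n with
  | zero => intro z r z' h; simp [toFront] at h
  | succ n ih =>
    rintro (_ | ⟨l, z⟩) r z' h
    · simp [toFront] at h
    rw [toFront] at h
    cases hlr : Nat.beq l r with
    | true => simp_all [Nat.eq_of_beq_eq_true hlr]
    | false =>
      rcases hz₁ : toFront adj n z r with _ | z₁
      · simp [hlr, hz₁] at h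
      have ih₁ := ih _ _ _ hz₁
      cases hadj : adj l r with
      | false =>
        obtain rfl : l :: z₁ = z' := by simpa [hlr, hz₁, hadj] using h
        simp only [wordProd_cons, ih₁, ← mul_assoc, hs.comm l r hadj]
      | true =>
        rcases hz₂ : toFront adj n z₁ l with _ | z₂
        · simp [hlr, hz₁, hadj, hz₂] at h
        obtain rfl : l :: r :: z₂ = z' := by simpa [hlr, hz₁, hadj, hz₂] using h
        simp only [wordProd_cons, ih₁, ih _ _ _ hz₂, ← mul_assoc, hs.braid l r hadj]

theorem IsCoxeterFamily.wordProd_coxeterReduce (hs : IsCoxeterFamily adj s) (z : List ℕ) :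
    wordProd s (coxeterReduce adj z) = wordProd s z := by
  induction z with
  | nil => rfl
  | cons l z ih =>
    rw [coxeterReduce]
    rcases hz' : toFront adj 400 (coxeterReduce adj z) l with _ | z'
    · simp [ih]
    · rw [wordProd_cons, ← ih, hs.wordProd_of_toFront _ _ _ _ hz', ← mul_assoc, hs.mul_self,
        one_mul]

theorem IsCoxeterFamily.wordProd_eq_one (hs : IsCoxeterFamily adj s) {z : List ℕ}
    (hz : coxeterReduce adj z = []) : wordProd s z = 1 := by
  rw [← hs.wordProd_coxeterReduce, hz, wordProd_nil]

theorem IsCoxeterFamily.commute_wordProd (hs : IsCoxeterFamily adj s) {y z : List ℕ}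
    (h : coxeterReduce adj (y ++ z ++ y.reverse ++ z.reverse) = []) :
    Commute (wordProd s y) (wordProd s z) := by
  have h := hs.wordProd_eq_one h
  simp only [wordProd_append, wordProd_reverse hs.mul_self] at h
  exact commutatorElement_eq_one_iff_commute.mp h

end Coxeter

section StrictEvaluation

/-- `f n`, arranged so that the kernel evaluates `n` to a numeral before it enters `f`. -/
def force {α : Type*} (n : ℕ) (f : ℕ → α) : α :=
  match n with
  | 0 => f 0
  | m + 1 => f m.succ

theorem force_eq {α : Type*} (n : ℕ) (f : ℕ → α) : force n f = f n := by cases n <;> rfl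

/-- `List.foldl` with the accumulator evaluated after each step. -/
def strictFoldl {α : Type*} (f : ℕ → α → ℕ) : List α → ℕ → ℕ
  | [], K => K
  | x :: l, K => force (f K x) (strictFoldl f l)

theorem strictFoldl_induction {α : Type*} {f : ℕ → α → ℕ} {P : ℕ → Prop} {l : List α}
    (hf : ∀ x ∈ l, ∀ K, P K → P (f K x)) {K : ℕ} (hK : P K) : P (strictFoldl f l K) := by
  induction l generalizing K with
  | nil => exact hK
  | cons x l ih =>
    rw [strictFoldl, force_eq]
    exact ih (fun y hy ↦ hf y (List.mem_cons_of_mem x hy)) (hf x List.mem_cons_self K hK)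

/-- `Nat.testBit`, built from functions for which the kernel has fast arithmetic. -/
def bitAt (K e : ℕ) : Bool := Nat.beq (Nat.land 1 (Nat.shiftRight K e)) 1

theorem bitAt_eq_testBit (K e : ℕ) : bitAt K e = K.testBit e := by
  have h : ∀ x ≤ 1, Nat.beq x 1 = (x != 0) := by decide
  exact h _ Nat.and_le_left

end StrictEvaluation

section CosetTable

variable {Γ : Type*} [Group Γ] (T : ℕ → ℕ → ℕ) (L : List ℕ)

/-- The element of `Γ` attached to a row of the coset table `T`: every row is reached from an
earlier one along the first letter of `L` that leads to an earlier row. -/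
def cosetRep (s : ℕ → Γ) (j : ℕ) : Γ :=
  match _h : L.find? fun l ↦ Nat.blt (T j l) j with
  | some l => cosetRep s (T j l) * s l
  | none => 1
termination_by j
decreasing_by exact Nat.blt_eq.mp (List.find?_some _h :)

/-- The Schreier generator of the edge of the coset table `T` that leaves row `i` along the
letter `l`. -/
def schreierGen (s : ℕ → Γ) (i l : ℕ) : Γ :=
  cosetRep T L s i * s l * (cosetRep T L s (T i l))⁻¹

/-- Whether the edge leaving row `i` along `l` belongs to the set of edges encoded by the bits of
`K`. Only the letters `l < 8` are encoded. -/
def hasEdge (K i l : ℕ) : Bool :=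
  bif Nat.blt l 8 then bitAt K (Nat.add (Nat.mul 8 i) l) else false

/-- Add the edge leaving row `i` along `l`, and its reverse, to the set encoded by `K`. -/
def addEdge (K i l : ℕ) : ℕ :=
  bif Nat.blt l 8 && Nat.beq (T (T i l) l) i then
    Nat.lor (Nat.lor K (Nat.pow 2 (Nat.add (Nat.mul 8 i) l)))
      (Nat.pow 2 (Nat.add (Nat.mul 8 (T i l)) l)) else K

/-- The edges outside `K` on the walk that starts in row `i` and follows a word. -/
def missingEdges (K : ℕ) : ℕ → List ℕ → List (ℕ × ℕ)
  | _, [] => []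
  | i, l :: w =>
    force i fun i ↦ bif hasEdge K i l then missingEdges K (T i l) w
      else (i, l) :: missingEdges K (T i l) w

/-- If the walk along `w` that starts in row `i` is closed and has exactly one edge outside `K`, add
that edge. -/
def deduceEdge (i K : ℕ) (w : List ℕ) : ℕ :=
  match missingEdges T K i w with
  | [e] => bif Nat.beq (w.foldl T i) i then addEdge T K e.1 e.2 else K
  | _ => K

/-- The edges of the tree that defines the representatives of the first `n` rows. -/
def treeEdges (n : ℕ) : ℕ :=
  strictFoldl
    (fun K j ↦ ((L.find? fun l ↦ Nat.blt (T j l) j).map (addEdge T K j)).getD K) (List.range n) 0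

/-- Todd–Coxeter deductions in the coset table `T` with `n` rows: starting from the tree, scan in
each pass the subgroup words `S` at row `0` and the relators `R` at all rows. -/
def deducedEdges (n : ℕ) (R S : List (List ℕ)) (passes : ℕ) : ℕ :=
  strictFoldl
    (fun K _ ↦ strictFoldl (fun K i ↦ strictFoldl (deduceEdge T i) R K) (List.range n)
      (strictFoldl (deduceEdge T 0) S K))
    (List.range passes) (treeEdges T L n)

/-- Whether the coset table `T` with `n` rows is complete and all its edges are obtained by
deductions. -/
def isClosedTable (n : ℕ) (R S : List (List ℕ)) (passes : ℕ) : Bool :=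
  force (deducedEdges T L n R S passes) fun K ↦
    (List.range n).all fun i ↦ L.all fun l ↦ Nat.blt (T i l) n && hasEdge K i l

variable {T L} {s : ℕ → Γ} {N H : Subgroup Γ}

theorem schreierGen_of_find? {j l : ℕ} (hl : s l * s l = 1)
    (h : (L.find? fun l ↦ Nat.blt (T j l) j) = some l) : schreierGen T L s j l = 1 := by
  have hj : cosetRep T L s j = cosetRep T L s (T j l) * s l := by
    rw [cosetRep]
    split <;> simp_all
  rw [schreierGen, hj, mul_assoc (cosetRep T L s (T j l)), hl, mul_one, mul_inv_cancel]

theorem schreierGen_reverse {i l : ℕ} (hl : s l * s l = 1) (h : T (T i l) l = i) :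
    schreierGen T L s (T i l) l = (schreierGen T L s i l)⁻¹ := by
  simp only [schreierGen, h, mul_inv_rev, inv_inv, inv_eq_of_mul_eq_one_left hl, mul_assoc]

theorem hasEdge_addEdge {K i l i' l' : ℕ} (h : hasEdge (addEdge T K i l) i' l' = true) :
    hasEdge K i' l' = true ∨ l' = l ∧ (i' = i ∨ i' = T i l ∧ T (T i l) l = i) := by
  rw [addEdge] at h
  cases hc : Nat.blt l 8 && Nat.beq (T (T i l) l) i with
  | false => simp_all
  | true =>
    rw [hc, cond_true] at h
    change hasEdge (K ||| 2 ^ (8 * i + l) ||| 2 ^ (8 * T i l + l)) i' l' = true at h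
    simp only [hasEdge, bitAt_eq_testBit, Bool.cond_false_right, Bool.and_eq_true, Nat.blt_eq,
      Nat.testBit_or, Nat.testBit_two_pow, Bool.or_eq_true, decide_eq_true_eq, Nat.beq_eq,
      Nat.add_eq, Nat.mul_eq] at h hc ⊢
    grind

variable (T L s H) in
/-- All edges encoded by `K` have their Schreier generators in `H`. -/
def EdgesIn (K : ℕ) : Prop := ∀ i l, hasEdge K i l = true → schreierGen T L s i l ∈ H

theorem EdgesIn.addEdge (hs : ∀ l, s l * s l = 1) {K i l : ℕ} (hK : EdgesIn T L s H K)
    (h : schreierGen T L s i l ∈ H) : EdgesIn T L s H (addEdge T K i l) := by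
  intro i' l' h'
  obtain h' | ⟨rfl, rfl | ⟨rfl, hT⟩⟩ := hasEdge_addEdge h'
  · exact hK i' l' h'
  · exact h
  · exact schreierGen_reverse (L := L) (hs l') hT ▸ H.inv_mem h

theorem schreierGen_mul_walk (i l : ℕ) (w : List ℕ) (r : Γ) :
    cosetRep T L s i * wordProd s (l :: w) * r =
      schreierGen T L s i l * (cosetRep T L s (T i l) * wordProd s w * r) := by
  simp only [schreierGen, wordProd_cons, mul_assoc, inv_mul_cancel_left]

theorem EdgesIn.walk_mem {K : ℕ} (hK : EdgesIn T L s H K) (w : List ℕ) :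
    ∀ i, missingEdges T K i w = [] →
      cosetRep T L s i * wordProd s w * (cosetRep T L s (w.foldl T i))⁻¹ ∈ H := by
  induction w with
  | nil => simp
  | cons l w ih =>
    intro i hi
    rw [missingEdges, force_eq] at hi
    cases hil : hasEdge K i l with
    | false => simp [hil] at hi
    | true =>
      rw [schreierGen_mul_walk]
      exact H.mul_mem (hK i l hil) (ih _ (by simpa [hil] using hi))

theorem EdgesIn.missing_mem {K : ℕ} (hK : EdgesIn T L s H K) {e : ℕ × ℕ} (w : List ℕ) :
    ∀ i, missingEdges T K i w = [e] →
      cosetRep T L s i * wordProd s w * (cosetRep T L s (w.foldl T i))⁻¹ ∈ H →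
      schreierGen T L s e.1 e.2 ∈ H := by
  induction w with
  | nil => simp [missingEdges]
  | cons l w ih =>
    intro i hi hw
    rw [missingEdges, force_eq] at hi
    rw [schreierGen_mul_walk, List.foldl_cons] at hw
    cases hil : hasEdge K i l with
    | false =>
      obtain ⟨rfl, hw'⟩ : (i, l) = e ∧ missingEdges T K (T i l) w = [] := by simpa [hil] using hi
      exact (H.mul_mem_cancel_right (hK.walk_mem w _ hw')).mp hw
    | true =>
      exact ih _ (by simpa [hil] using hi) ((H.mul_mem_cancel_left (hK i l hil)).mp hw)

theorem EdgesIn.deduceEdge (hs : ∀ l, s l * s l = 1) {i K : ℕ} (hK : EdgesIn T L s H K)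
    {w : List ℕ} (hw : cosetRep T L s i * wordProd s w * (cosetRep T L s i)⁻¹ ∈ H) :
    EdgesIn T L s H (deduceEdge T i K w) := by
  unfold Fi22E.deduceEdge
  split
  case h_2 => exact hK
  case h_1 e he =>
    cases hend : Nat.beq (w.foldl T i) i with
    | false => exact hK
    | true =>
      refine hK.addEdge hs (hK.missing_mem w i he ?_)
      rwa [Nat.eq_of_beq_eq_true hend]

theorem edgesIn_treeEdges (hs : ∀ l, s l * s l = 1) (n : ℕ) :
    EdgesIn T L s H (treeEdges T L n) := by
  refine strictFoldl_induction (fun j _ K hK ↦ ?_) fun i l h ↦ by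
    simp [hasEdge, bitAt_eq_testBit] at h
  cases hl : L.find? fun l ↦ Nat.blt (T j l) j with
  | none => exact hK
  | some l => exact hK.addEdge hs (by rw [schreierGen_of_find? (hs l) hl]; exact H.one_mem)

theorem cosetRep_zero : cosetRep T L s 0 = 1 := by
  rw [cosetRep]
  split
  case h_1 l h => simpa using List.find?_some h
  case h_2 => rfl

theorem cosetRep_mem (hs : ∀ l, s l ∈ H) (j : ℕ) : cosetRep T L s j ∈ H := by
  induction j using Nat.strong_induction_on with
  | _ j ih =>
    rw [cosetRep]
    split
    case h_1 l h => exact H.mul_mem (ih _ (Nat.blt_eq.mp (List.find?_some h :))) (hs l)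
    case h_2 => exact H.one_mem

variable {n : ℕ} {R S : List (List ℕ)} {passes : ℕ}

theorem edgesIn_deducedEdges (hs : ∀ l, s l * s l = 1)
    (hsN : ∀ l, s l ∈ Subgroup.normalizer (N : Set Γ)) (hR : ∀ w ∈ R, wordProd s w ∈ N)
    (hNH : N ≤ H) (hS : ∀ w ∈ S, wordProd s w ∈ H) :
    EdgesIn T L s H (deducedEdges T L n R S passes) := by
  refine strictFoldl_induction (fun _ _ K hK ↦ ?_) (edgesIn_treeEdges hs n)
  refine strictFoldl_induction (fun i _ K hK ↦ ?_) ?_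
  · exact strictFoldl_induction (fun w hw K hK ↦ hK.deduceEdge hs <| hNH <|
      (Subgroup.mem_normalizer_iff.mp (cosetRep_mem hsN i) _).mp (hR w hw)) hK
  · exact strictFoldl_induction
      (fun w hw K hK ↦ hK.deduceEdge hs (by simpa [cosetRep_zero] using hS w hw)) hK

theorem schreierGen_mem_of_isClosedTable (hs : ∀ l, s l * s l = 1)
    (hsN : ∀ l, s l ∈ Subgroup.normalizer (N : Set Γ)) (hR : ∀ w ∈ R, wordProd s w ∈ N)
    (hNH : N ≤ H) (hS : ∀ w ∈ S, wordProd s w ∈ H) (h : isClosedTable T L n R S passes = true)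
    {i l : ℕ} (hi : i < n) (hl : l ∈ L) : T i l < n ∧ schreierGen T L s i l ∈ H := by
  rw [isClosedTable, force_eq, List.all_eq_true] at h
  have hil := List.all_eq_true.mp (h i (List.mem_range.mpr hi)) l hl
  rw [Bool.and_eq_true, Nat.blt_eq] at hil
  exact ⟨hil.1, edgesIn_deducedEdges hs hsN hR hNH hS i l hil.2⟩

end CosetTable

section OrbitTable

/-- The transpositions in the cycle decompositions of the seven letters on the 22 points. -/
def letterSwaps (l : ℕ) : List (ℕ × ℕ) :=
  [[(0, 1), (5, 6), (7, 8), (10, 12), (14, 16), (15, 18), (17, 19), (20, 21)],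
    [(1, 2), (4, 5), (8, 11), (12, 13), (14, 15), (16, 17), (18, 19), (20, 21)],
    [(1, 5), (2, 4), (8, 12), (11, 13), (14, 17), (15, 16), (18, 20), (19, 21)],
    [(2, 3), (5, 7), (6, 8), (9, 13), (14, 17), (15, 18), (16, 19), (20, 21)],
    [(1, 4), (3, 7), (6, 9), (11, 12), (14, 18), (15, 20), (16, 21), (17, 19)],
    [(0, 6), (2, 4), (7, 10), (11, 13), (14, 18), (15, 21), (16, 19), (17, 20)],
    [(1, 2), (6, 9), (7, 10), (8, 14), (11, 15), (12, 16), (13, 17), (20, 21)]].getD l []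

/-- The image of a point under a letter. -/
def pointStep (z l : ℕ) : ℕ :=
  match (letterSwaps l).find? fun p ↦ Nat.beq p.1 z || Nat.beq p.2 z with
  | some p => p.1 + p.2 - z
  | none => z

/-- The image under a letter of the set of points encoded by the bits of `m`. -/
def maskStep (m l : ℕ) : ℕ :=
  strictFoldl (fun m p ↦ bif (bitAt m p.1).xor (bitAt m p.2) then
    m ^^^ (2 ^ p.1 ||| 2 ^ p.2) else m) (letterSwaps l) m

/-- The `k`-th entry of a sequence of numbers below `2 ^ b` packed into `P`. -/
def packedEntry (b P k : ℕ) : ℕ := Nat.mod (Nat.shiftRight P (Nat.mul b k)) (Nat.pow 2 b)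

/-- Breadth-first search through the orbit of a set of points, encoded as a bit mask. The list holds
the pairs of a row and a letter that remain to be treated, `P` the `n` masks found so far, `J` their
positions, and `Q` the resulting table. The modulus `6861` separates the masks of each of the orbits
below, so that a mask is found in `J` by its residue. -/
def packedOrbitTable : List (ℕ × ℕ) → (P J n Q : ℕ) → ℕ
  | [], _, _, _, Q => Q
  | p :: ps, P, J, n, Q =>
    force (maskStep (packedEntry 22 P p.1) p.2) fun m ↦
    force (Nat.mod m 6861) fun r ↦
    force (packedEntry 9 J r) fun k ↦
    force (8 * p.1 + p.2) fun e ↦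
    bif Nat.beq k 0 then
      force (P ||| m <<< (22 * n)) fun P ↦
      force (J ||| (n + 1) <<< (9 * r)) fun J ↦
      force (Q ||| n <<< (9 * e)) fun Q ↦
      force (n + 1) fun n ↦ packedOrbitTable ps P J n Q
    else
      force (Q ||| (k - 1) <<< (9 * e)) fun Q ↦ packedOrbitTable ps P J n Q

/-- The entry of a packed table in row `i` and column `l`. -/
def tableEntry (Q i l : ℕ) : ℕ := packedEntry 9 Q (Nat.add (Nat.mul 8 i) l)

/-- The action of the letters `L` on the first `n` sets in the orbit of `m`. -/
def orbitTable (L : List ℕ) (m n : ℕ) : ℕ :=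
  packedOrbitTable ((List.range n).product L) m (1 <<< (9 * (m % 6861))) 1 0

end OrbitTable

section CosetBounds

variable {Γ : Type*} [Group Γ]

theorem card_closure_le_of_cosets {n : ℕ} {r : Fin n → Γ} {S : Set Γ} {H : Subgroup Γ}
    (hS : ∀ s ∈ S, s⁻¹ ∈ S) (h₁ : ∃ i, r i ∈ H)
    (h : ∀ i, ∀ s ∈ S, ∃ j, r i * s * (r j)⁻¹ ∈ H) :
    ENat.card (Subgroup.closure S) ≤ n * ENat.card H := by
  have hstep : ∀ x, ∀ s ∈ S, (∃ i, x * (r i)⁻¹ ∈ H) → ∃ j, x * s * (r j)⁻¹ ∈ H := by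
    rintro x s hs ⟨i, hi⟩
    obtain ⟨j, hj⟩ := h i s hs
    exact ⟨j, by simpa [mul_assoc] using H.mul_mem hi hj⟩
  have hcover : ∀ x ∈ Subgroup.closure S, ∃ i, x * (r i)⁻¹ ∈ H := fun x hx ↦ by
    induction hx using Subgroup.closure_induction_right with
    | one => simpa using h₁
    | mul_right x _ s hs ih => exact hstep x s hs ih
    | mul_inv_cancel x _ s hs ih => exact hstep x s⁻¹ (hS s hs) ih
  choose i hi using hcover
  let f : Subgroup.closure S → Fin n × H := fun x ↦ (i x x.2, ⟨_, hi x x.2⟩)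
  have hf : Function.Injective f := by
    intro x y hxy
    have hi : i x x.2 = i y y.2 := congrArg Prod.fst hxy
    have hxy : (x : Γ) * (r (i x x.2))⁻¹ = y * (r (i y y.2))⁻¹ :=
      congrArg (fun p ↦ (p.2 : Γ)) hxy
    rwa [hi, mul_left_inj, SetLike.coe_eq_coe] at hxy
  simpa [ENat.card_prod] using ENat.card_le_card_of_injective hf

theorem card_closure_le_two_pow (xs : List Γ) (hsq : ∀ x ∈ xs, x * x = 1)
    (hcomm : ∀ x ∈ xs, ∀ y ∈ xs, Commute x y) :
    ENat.card (Subgroup.closure {x | x ∈ xs}) ≤ 2 ^ xs.length := by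
  induction xs with
  | nil => simp
  | cons y xs ih =>
    have hinv : ∀ x ∈ y :: xs, x⁻¹ ∈ y :: xs := fun x hx ↦ by
      rwa [inv_eq_of_mul_eq_one_left (hsq x hx)]
    have hxs : ∀ x ∈ xs, x ∈ Subgroup.closure {x | x ∈ xs} := fun x hx ↦
      Subgroup.subset_closure hx
    have hcosets : ∀ i, ∀ x ∈ y :: xs, ∃ j,
        ![1, y] i * x * (![1, y] j)⁻¹ ∈ Subgroup.closure {x | x ∈ xs} := by
      simp only [Fin.forall_fin_two, Fin.exists_fin_two, List.forall_mem_cons]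
      refine ⟨⟨Or.inr (by simp), fun x hx ↦ Or.inl (by simpa using hxs x hx)⟩,
        Or.inl (by simp [hsq y List.mem_cons_self]), fun x hx ↦ Or.inr ?_⟩
      simpa [(hcomm y List.mem_cons_self x (List.mem_cons_of_mem y hx)).eq] using hxs x hx
    calc ENat.card (Subgroup.closure {x | x ∈ y :: xs})
        ≤ (2 : ℕ) * ENat.card (Subgroup.closure {x | x ∈ xs}) :=
          card_closure_le_of_cosets hinv ⟨0, one_mem _⟩ hcosets
      _ ≤ (2 : ℕ) * 2 ^ xs.length := by
          gcongr
          exact ih (fun x hx ↦ hsq x (List.mem_cons_of_mem y hx)) fun x hx z hz ↦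
            hcomm x (List.mem_cons_of_mem y hx) z (List.mem_cons_of_mem y hz)
      _ = 2 ^ (y :: xs).length := by rw [List.length_cons, pow_succ', Nat.cast_ofNat]

theorem card_closure_le_of_isClosedTable {T : ℕ → ℕ → ℕ} {L L' : List ℕ} {n : ℕ}
    {R : List (List ℕ)} {passes : ℕ} {s : ℕ → Γ} {N : Subgroup Γ} (hs : ∀ l, s l * s l = 1)
    (hsN : ∀ l, s l ∈ Subgroup.normalizer (N : Set Γ)) (hR : ∀ w ∈ R, wordProd s w ∈ N)
    (hn : 0 < n) (h : isClosedTable T L n R (L'.map fun l ↦ [l]) passes = true) :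
    ENat.card (Subgroup.closure (N ∪ s '' {l | l ∈ L})) ≤
      n * ENat.card (Subgroup.closure (N ∪ s '' {l | l ∈ L'})) := by
  set H := Subgroup.closure ((N : Set Γ) ∪ s '' {l | l ∈ L'})
  have hNH : N ≤ H := fun x hx ↦ Subgroup.subset_closure (Or.inl hx)
  have hS : ∀ w ∈ L'.map fun l ↦ [l], wordProd s w ∈ H := fun w hw ↦ by
    obtain ⟨l, hl, rfl⟩ := List.mem_map.mp hw
    have hmem : s l ∈ H := Subgroup.subset_closure (Or.inr ⟨l, hl, rfl⟩)
    simpa using hmem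
  refine card_closure_le_of_cosets (r := fun i : Fin n ↦ cosetRep T L s i) ?_
    ⟨⟨0, hn⟩, by simp [cosetRep_zero]⟩ ?_
  · rintro _ (hx | ⟨l, hl, rfl⟩)
    · exact Or.inl (N.inv_mem hx)
    · exact Or.inr ⟨l, hl, (inv_eq_of_mul_eq_one_left (hs l)).symm⟩
  · rintro i _ (hx | ⟨l, hl, rfl⟩)
    · exact ⟨i, hNH ((Subgroup.mem_normalizer_iff.mp (cosetRep_mem hsN i) _).mp hx)⟩
    · obtain ⟨hlt, hmem⟩ := schreierGen_mem_of_isClosedTable hs hsN hR hNH hS h i.2 hl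
      exact ⟨⟨T i l, hlt⟩, hmem⟩

end CosetBounds

section Subgroups

variable {Γ : Type*} [Group Γ]

theorem wordProd_mem_iff_filter {s : ℕ → Γ} {N : Subgroup Γ} {p : ℕ → Bool}
    (hsN : ∀ l, p l = true → s l ∈ Subgroup.normalizer (N : Set Γ))
    (hN : ∀ l, p l = false → s l ∈ N) (w : List ℕ) :
    ∀ x ∈ Subgroup.normalizer (N : Set Γ),
      x * wordProd s w ∈ N ↔ x * wordProd s (w.filter p) ∈ N := by
  induction w with
  | nil => simp
  | cons l w ih =>
    intro x hx
    cases hl : p l with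
    | false =>
      have hxl := (Subgroup.mem_normalizer_iff.mp hx _).mp (hN l hl)
      rw [wordProd_cons, List.filter_cons_of_neg (by simp [hl]), ← ih x hx,
        ← N.mul_mem_cancel_left hxl (y := x * wordProd s w)]
      simp only [mul_assoc, inv_mul_cancel_left]
    | true =>
      rw [wordProd_cons, List.filter_cons_of_pos hl, wordProd_cons, ← mul_assoc, ← mul_assoc]
      exact ih _ (mul_mem hx (hsN l hl))

/-- If the word `w` has exactly one letter outside `A`, add that letter to `A`. -/
def addMissing (A w : List ℕ) : List ℕ :=
  match w.filter (! A.elem ·) with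
  | [z] => z :: A
  | _ => A

theorem forall_mem_foldl_addMissing {P : ℕ → Γ} {H : Subgroup Γ} {D : List (List ℕ)}
    (hD : ∀ w ∈ D, wordProd P w = 1) {A : List ℕ} (hA : ∀ z ∈ A, P z ∈ H) :
    ∀ z ∈ D.foldl addMissing A, P z ∈ H := by
  refine List.foldlRecOn (motive := fun A ↦ ∀ z ∈ A, P z ∈ H) D _ hA fun A hA w hw ↦ ?_
  rw [addMissing]
  split
  case h_2 => exact hA
  case h_1 z hz =>
    obtain ⟨w₁, w₂, rfl, hw₁, -, hw₂⟩ := List.filter_eq_cons_iff.mp hz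
    have hmem₁ : wordProd P w₁ ∈ H := wordProd_mem P fun y hy ↦ hA y (by simpa using hw₁ y hy)
    have hmem₂ : wordProd P w₂ ∈ H := wordProd_mem P fun y hy ↦
      hA y (by simpa using List.filter_eq_nil_iff.mp hw₂ y hy)
    have hw := hD _ hw
    rw [wordProd_append, wordProd_cons] at hw
    have hz : P z ∈ H := by
      rw [← H.mul_mem_cancel_right hmem₂, ← H.mul_mem_cancel_left hmem₁, hw]
      exact H.one_mem
    exact List.forall_mem_cons.mpr ⟨hz, hA⟩

theorem card_mul_card_inf_centralizer_le {H : Subgroup Γ} [Finite H] {x : Γ} {A : Finset Γ}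
    (hA : ∀ y ∈ A, ∃ k ∈ H, k * x * k⁻¹ = y) :
    A.card * Nat.card ↥(H ⊓ Subgroup.centralizer {x}) ≤ Nat.card H := by
  choose! k hk hkx using hA
  let f : A × ↥(H ⊓ Subgroup.centralizer {x}) → H := fun p ↦
    ⟨k p.1 * p.2, H.mul_mem (hk p.1 p.1.2) p.2.2.1⟩
  have hf : ∀ p, (f p : Γ) * x * (f p : Γ)⁻¹ = p.1 := fun ⟨y, z⟩ ↦ by
    have hz : (z : Γ) * x = x * z := Subgroup.mem_centralizer_singleton_iff.mp z.2.2
    calc k y * z * x * (k y * z)⁻¹ = k y * x * (k y)⁻¹ := by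
          rw [mul_assoc (k y), hz]
          group
      _ = y := hkx y y.2
  have hinj : Function.Injective f := by
    rintro ⟨y, z⟩ ⟨y', z'⟩ h
    obtain rfl : y = y' := Subtype.ext <| by rw [← hf (y, z), h, hf (y', z')]
    have hz : k y * (z : Γ) = k y * z' := congrArg Subtype.val h
    rw [mul_right_inj, SetLike.coe_eq_coe] at hz
    rw [hz]
  simpa [Nat.card_prod] using Nat.card_le_card_of_injective f hinj

theorem isPGroup_closure {p : ℕ} {S : Set Γ} (hcomm : ∀ x ∈ S, ∀ y ∈ S, Commute x y)
    (hS : ∀ x ∈ S, x ^ p = 1) : IsPGroup p (Subgroup.closure S) := by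
  have := Subgroup.isMulCommutative_closure hcomm
  intro ⟨y, hy⟩
  refine ⟨1, Subtype.ext ?_⟩
  rw [pow_one, Subgroup.coe_pow, Subgroup.coe_one]
  induction hy using Subgroup.closure_induction with
  | mem y hy => exact hS y hy
  | one => exact one_pow p
  | mul y y' hy hy' h h' =>
    have hyy' : Commute y y' :=
      congrArg Subtype.val (mul_comm' (⟨y, hy⟩ : Subgroup.closure S) ⟨y', hy'⟩)
    rw [hyy'.mul_pow, h, h', one_mul]
  | inv y hy h => rw [inv_pow, h, inv_one]

theorem pow_orderOf_le_card {N : Type*} [Group N] [Finite N] {p q : ℕ} [Fact p.Prime]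
    [Fact q.Prime] (hN : IsPGroup p N) {φ : MulAut N} (hq : φ ^ q = 1) (hφ : φ ≠ 1) :
    p ^ orderOf (p : ZMod q) ≤ Nat.card N := by
  have hzpowers : IsPGroup q (Subgroup.zpowers φ) :=
    IsPGroup.of_card (n := 1) (by rw [Nat.card_zpowers, orderOf_eq_prime hq hφ, pow_one])
  obtain ⟨n, hn⟩ := IsPGroup.iff_card.mp hN
  let F : Subgroup N := FixedPoints.subgroup (Subgroup.zpowers φ) N
  obtain ⟨m, hm⟩ := IsPGroup.iff_card.mp (hN.to_subgroup F)
  have hF : F ≠ ⊤ := fun hF ↦ hφ <| MulEquiv.ext fun x ↦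
    (hF ▸ Subgroup.mem_top x : x ∈ F) ⟨φ, Subgroup.mem_zpowers φ⟩
  have hlt : Nat.card F < Nat.card N :=
    (Subgroup.card_le_card_group F).lt_of_ne fun h ↦ hF (Subgroup.eq_top_of_card_eq F h)
  have hmn : m < n := by
    rwa [hm, hn, Nat.pow_lt_pow_iff_right (Fact.out : p.Prime).one_lt] at hlt
  have hmod : (p : ZMod q) ^ n = (p : ZMod q) ^ m := by
    have h := (ZMod.natCast_eq_natCast_iff _ _ q).mpr (hzpowers.card_modEq_card_fixedPoints N)
    rwa [show Nat.card (MulAction.fixedPoints (Subgroup.zpowers φ) N) = p ^ m from hm, hn,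
      Nat.cast_pow, Nat.cast_pow] at h
  rw [hn]
  refine Nat.pow_le_pow_right (Fact.out : p.Prime).pos ?_
  rcases eq_or_ne (p : ZMod q) 0 with hp | hp
  · simp [hp]
  have hone : (p : ZMod q) ^ (n - m) = 1 := by
    rwa [← mul_right_inj' (pow_ne_zero m hp), mul_one, ← pow_add, Nat.add_sub_cancel' hmn.le]
  exact (Nat.le_of_dvd (Nat.sub_pos_of_lt hmn) (orderOf_dvd_of_pow_eq_one hone)).trans
    (Nat.sub_le n m)

theorem commute_of_presentedGroup_mk_eq_one {α : Type*} {R : Set (FreeGroup α)}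
    {φ : FreeGroup α →* Γ} (hR : ∀ r ∈ R, ∀ x, Commute (φ r) (φ (.of x))) {w : FreeGroup α}
    (hw : PresentedGroup.mk R w = 1) (y : FreeGroup α) : Commute (φ w) (φ y) := by
  let Z : Subgroup (FreeGroup α) := (Subgroup.center φ.range).comap φ.rangeRestrict
  have hRZ : R ⊆ Z := by
    rintro r hr
    refine Subgroup.mem_center_iff.mpr ?_
    rintro ⟨_, z, rfl⟩
    have hz : Commute (φ r) (φ z) := by
      induction z using FreeGroup.induction_on with
      | C1 => simp
      | of x => exact hR r hr x
      | inv_of x hx => simpa using hx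
      | mul x y hx hy => simpa using hx.mul_right hy
    exact Subtype.ext hz.symm
  have hw : w ∈ Subgroup.normalClosure R := (QuotientGroup.eq_one_iff w).mp hw
  have hwZ := Subgroup.mem_center_iff.mp (Subgroup.normalClosure_le_normal hRZ hw)
  exact (congrArg Subtype.val (hwZ (φ.rangeRestrict y))).symm

end Subgroups

section PackedMatrices

open Matrix

/-- The number whose set bits are the multiples `0, b, …, b * (n - 1)` of `b`. -/
def columnMask (b : ℕ) : ℕ → ℕ
  | 0 => 0
  | n + 1 => 2 ^ b * columnMask b n + 1

/-- The matrix over the field with two elements whose rows are packed into `P`. -/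
def unpack (b P : ℕ) : Matrix (Fin b) (Fin b) (ZMod 2) :=
  .of fun i j ↦ if P.testBit (b * i + j) then 1 else 0

/-- The sum of the products of column `k` of `P` and row `k` of `Q` for `k < n`. The product of the
integers that represent a column and a row represents their product as matrices. -/
def packedMul (b P Q : ℕ) : ℕ → ℕ
  | 0 => 0
  | k + 1 => ((P >>> k) &&& columnMask b b) * packedEntry b Q k ^^^ packedMul b P Q k

theorem testBit_land_columnMask_mul {b r : ℕ} (hr : r < 2 ^ b) {j : ℕ} (hj : j < b) (n x i : ℕ) :
    ((x &&& columnMask b n) * r).testBit (b * i + j) =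
      (decide (i < n) && x.testBit (b * i) && r.testBit j) := by
  induction n generalizing x i with
  | zero => simp [columnMask]
  | succ n ih =>
    have hone : 1 < 2 ^ b := Nat.one_lt_two_pow (by lia)
    have hsplit : x &&& columnMask b (n + 1) =
        2 ^ b * ((x >>> b) &&& columnMask b n) + (x.testBit 0).toNat := by
      refine Nat.eq_of_testBit_eq fun k ↦ ?_
      rw [Nat.testBit_and, columnMask, Nat.testBit_two_pow_mul_add _ hone,
        Nat.testBit_two_pow_mul_add _ ((Bool.toNat_le _).trans_lt hone)]
      split_ifs with hk
      · cases k <;> cases x.testBit 0 <;> simp [Nat.testBit_succ]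
      · simp [Nat.add_sub_cancel' (not_lt.mp hk)]
    have hlow : (x.testBit 0).toNat * r < 2 ^ b := by cases x.testBit 0 <;> simp [hr]
    rw [hsplit, add_mul, mul_assoc, Nat.testBit_two_pow_mul_add _ hlow]
    cases i with
    | zero => cases x.testBit 0 <;> simp [hj]
    | succ i =>
      rw [if_neg (by lia), show b * (i + 1) + j - b = b * i + j by lia, ih]
      simp [mul_add, add_comm b]

theorem unpack_xor (b P Q : ℕ) : unpack b (P ^^^ Q) = unpack b P + unpack b Q := by
  ext i j
  simp only [unpack, of_apply, Nat.testBit_xor, Matrix.add_apply]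
  cases P.testBit (b * i + j) <;> cases Q.testBit (b * i + j) <;> rfl

theorem unpack_packedMul (b P Q : ℕ) : unpack b (packedMul b P Q b) = unpack b P * unpack b Q := by
  suffices h : ∀ n ≤ b, ∀ i j, unpack b (packedMul b P Q n) i j =
      ∑ k ∈ Finset.range n, (if P.testBit (b * i + k) then 1 else 0) *
        (if Q.testBit (b * k + j) then 1 else 0) by
    ext i j
    rw [h b le_rfl, Finset.sum_range]
    rfl
  intro n hn i j
  induction n with
  | zero => simp [packedMul, unpack]
  | succ n ih =>
    have hrow : packedEntry b Q n < 2 ^ b := Nat.mod_lt _ (Nat.two_pow_pos b)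
    have hentry : (packedEntry b Q n).testBit j = Q.testBit (b * n + j) := by
      change (Q >>> (b * n) % 2 ^ b).testBit j = _
      simp [Nat.testBit_mod_two_pow]
    rw [packedMul, unpack_xor, Matrix.add_apply, ih (by lia), Finset.sum_range_succ, add_comm]
    simp [unpack, testBit_land_columnMask_mul hrow j.2, hentry, add_comm n, ← ite_and, and_comm]

end PackedMatrices

section Involutions

variable {Γ : Type*} [Group Γ] {x y : Γ}

theorem commute_of_mul_self_eq_one (hx : x * x = 1) (hy : y * y = 1) (hxy : (x * y) ^ 2 = 1) :
    Commute x y := by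
  rw [sq] at hxy
  calc x * y = (x * y)⁻¹ := (inv_eq_of_mul_eq_one_left hxy).symm
    _ = y * x := by
      rw [mul_inv_rev, inv_eq_of_mul_eq_one_left hx, inv_eq_of_mul_eq_one_left hy]

theorem braid_of_mul_self_eq_one (hx : x * x = 1) (hy : y * y = 1) (hxy : (x * y) ^ 3 = 1) :
    x * y * x = y * x * y := by
  have hxyx : x * y * x * (y * x * y) = 1 := by simpa [pow_succ, mul_assoc] using hxy
  calc x * y * x = (y * x * y)⁻¹ := eq_inv_of_mul_eq_one_left hxyx
    _ = y * x * y := by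
      rw [mul_inv_rev, mul_inv_rev, inv_eq_of_mul_eq_one_left hx, inv_eq_of_mul_eq_one_left hy,
        mul_assoc]

end Involutions

section Presentation

open Fi22PS

/-- The free generators `A, …, I`, numbered from `0`. All other numbers stand for `1`. -/
def freeGen (k : ℕ) : FreeGroup (Fin 9) := if h : k < 9 then .of ⟨k, h⟩ else 1

/-- The elements `a, …, i` of the presented group, numbered from `0`. All other numbers stand
for `1`. -/
def gen (k : ℕ) : Gp := PresentedGroup.mk rels (freeGen k)

/-- Adjacency in the Coxeter diagram of the generators: the path `a, …, g` with the branch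
`d, h, i`. -/
def diagram (k l : ℕ) : Bool :=
  ([2, 5, 10, 148, 40, 80, 32, 264, 128].getD k 0).testBit l

/-- The relators as powers of words. -/
def relatorPowers : List (List ℕ × ℕ) :=
  [([0], 2), ([1], 2), ([2], 2), ([3], 2), ([4], 2), ([5], 2), ([6], 2), ([7], 2), ([8], 2),
    ([0, 1], 3), ([1, 2], 3), ([2, 3], 3), ([3, 4], 3), ([4, 5], 3), ([5, 6], 3),
    ([0, 2], 2), ([0, 3], 2), ([0, 4], 2), ([0, 5], 2), ([0, 6], 2), ([0, 7], 2), ([0, 8], 2),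
    ([1, 3], 2), ([1, 4], 2), ([1, 5], 2), ([1, 6], 2), ([1, 7], 2), ([1, 8], 2),
    ([2, 4], 2), ([2, 5], 2), ([2, 6], 2), ([2, 7], 2), ([2, 8], 2),
    ([3, 5], 2), ([3, 6], 2), ([4, 6], 2), ([4, 7], 2), ([4, 8], 2),
    ([3, 7], 3), ([7, 8], 3), ([3, 8], 2), ([5, 7], 2), ([5, 8], 2), ([6, 7], 2), ([6, 8], 2),
    ([3, 2, 1, 3, 4, 5, 3, 7, 8], 10), ([0, 1, 2, 3, 4, 5, 7], 9), ([1, 2, 3, 4, 5, 6, 7], 9)]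

theorem mem_rels_iff {r : FreeGroup (Fin 9)} :
    r ∈ rels ↔ ∃ p ∈ relatorPowers, r = wordProd freeGen p.1 ^ p.2 := by
  have hgen : freeGen 0 = A ∧ freeGen 1 = B ∧ freeGen 2 = C ∧ freeGen 3 = D ∧ freeGen 4 = E ∧
      freeGen 5 = F ∧ freeGen 6 = G ∧ freeGen 7 = H ∧ freeGen 8 = I :=
    ⟨rfl, rfl, rfl, rfl, rfl, rfl, rfl, rfl, rfl⟩
  simp only [rels, Set.mem_insert_iff, Set.mem_singleton_iff, relatorPowers,
    List.exists_mem_cons_iff, List.not_mem_nil, false_and, exists_false, or_false, wordProd_cons,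
    wordProd_nil, mul_one, mul_assoc, hgen]

theorem wordProd_gen_pow {w : List ℕ} {n : ℕ} (h : (w, n) ∈ relatorPowers) :
    wordProd gen w ^ n = 1 := by
  have hmk := PresentedGroup.one_of_mem (mem_rels_iff.mpr ⟨_, h, rfl⟩)
  rwa [map_pow, map_wordProd] at hmk

theorem gen_of_le {k : ℕ} (hk : 9 ≤ k) : gen k = 1 := by
  simp [gen, freeGen, hk.not_gt]

theorem gen_mul_self (k : ℕ) : gen k * gen k = 1 := by
  obtain hk | hk := lt_or_ge k 9
  · have h : ∀ k < 9, ([k], 2) ∈ relatorPowers := by decide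
    simpa [sq] using wordProd_gen_pow (h k hk)
  · simp [gen_of_le hk]

theorem isCoxeterFamily_gen : IsCoxeterFamily diagram gen where
  mul_self := gen_mul_self
  comm k l hkl := by
    have h : ∀ k l : Fin 9, diagram k l = false → k = l ∨ ([k.1, l.1], 2) ∈ relatorPowers ∨
        ([l.1, k.1], 2) ∈ relatorPowers := by decide
    obtain hk | hk := le_or_gt 9 k
    · simp [gen_of_le hk]
    obtain hl | hl := le_or_gt 9 l
    · simp [gen_of_le hl]
    have hcomm {k l : ℕ} (h : ([k, l], 2) ∈ relatorPowers) : Commute (gen k) (gen l) :=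
      commute_of_mul_self_eq_one (gen_mul_self k) (gen_mul_self l)
        (by simpa using wordProd_gen_pow h)
    obtain heq | hkl | hlk := h ⟨k, hk⟩ ⟨l, hl⟩ hkl
    · rw [Fin.mk.inj heq]
    · exact hcomm hkl
    · exact (hcomm hlk).symm
  braid k l hkl := by
    have h : ∀ k l : Fin 9, diagram k l = true → ([k.1, l.1], 3) ∈ relatorPowers ∨
        ([l.1, k.1], 3) ∈ relatorPowers := by decide
    have hk : k < 9 := by
      by_contra hk
      rw [diagram, List.getD_eq_default _ _ (not_lt.mp hk), Nat.zero_testBit] at hkl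
      contradiction
    have hl : l < 9 := by
      have hrow : ∀ k < 9, [2, 5, 10, 148, 40, 80, 32, 264, 128].getD k 0 < 2 ^ 9 := by decide
      by_contra hl
      rw [diagram, Nat.testBit_lt_two_pow ((hrow k hk).trans_le (by gcongr <;> lia))] at hkl
      contradiction
    have hbraid {k l : ℕ} (h : ([k, l], 3) ∈ relatorPowers) :
        gen k * gen l * gen k = gen l * gen k * gen l :=
      braid_of_mul_self_eq_one (gen_mul_self k) (gen_mul_self l)
        (by simpa using wordProd_gen_pow h)
    obtain hkl | hlk := h ⟨k, hk⟩ ⟨l, hl⟩ hkl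
    · exact hbraid hkl
    · exact (hbraid hlk).symm

end Presentation

section Letters

open Fi22PS

/-- Words in the generators for the seven involutions `0, …, 6` that permute the 22 points. The
letters `0, …, 3` are `u`, `v`, `w`, `x`, and the additional letter `7` is `a`. -/
def letterWord (l : ℕ) : List ℕ :=
  [[1, 0, 2, 1], [3, 2, 4, 3], [3, 4, 7, 3], [5, 4, 6, 5], [5, 4, 3, 7, 2, 3, 4, 5],
    [1, 2, 3, 7, 4, 3, 2, 1], [8, 7, 3, 4, 2, 3, 7, 8], [0]].getD l []

/-- The element of the presented group that a letter stands for. -/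
def letter (l : ℕ) : Gp := wordProd gen (letterWord l)

theorem wordProd_letter (z : List ℕ) : wordProd letter z = wordProd gen (z.flatMap letterWord) :=
  (wordProd_flatMap gen letterWord z).symm

theorem letter_mul_self (l : ℕ) : letter l * letter l = 1 := by
  obtain hl | hl := lt_or_ge l 8
  · have h : ∀ l < 8, coxeterReduce diagram (letterWord l ++ letterWord l) = [] := by
      decide +kernel
    simpa [letter] using isCoxeterFamily_gen.wordProd_eq_one (h l hl)
  · simp [letter, letterWord, hl]

/-- Relators of the letters `0, …, 6`. Except for the last one they follow from the Coxeter
relations. -/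
def letterRelators : List (List ℕ) :=
  [[1, 2, 1, 2], [1, 4, 2, 4], [0, 2, 0, 5], [0, 3, 0, 3], [1, 6, 1, 6], [1, 2, 5, 1, 5],
    [1, 2, 3, 4, 3], [0, 1, 0, 1, 0, 1], [1, 3, 1, 3, 1, 3], [2, 3, 2, 3, 2, 3],
    [3, 5, 3, 5, 3, 5], [0, 6, 0, 6, 0, 6], [3, 6, 3, 6, 3, 6], [4, 5, 6, 4, 5, 6]]

/-- The word `(dcbdefdhi)¹⁰`, the relator that extends the Coxeter group of the diagram. -/
def spiderWord : List ℕ := (List.replicate 10 [3, 2, 1, 3, 4, 5, 3, 7, 8]).flatten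

theorem wordProd_gen_flatten_replicate {w : List ℕ} {n : ℕ} (h : (w, n) ∈ relatorPowers) :
    wordProd gen (List.replicate n w).flatten = 1 := by
  rw [wordProd_flatten_replicate, wordProd_gen_pow h]

theorem wordProd_letter_four_five_six : wordProd letter [4, 5, 6, 4, 5, 6] = 1 := by
  have hspider : wordProd gen spiderWord = 1 := wordProd_gen_flatten_replicate (by decide)
  have h : coxeterReduce diagram ([4, 5, 6, 4, 5, 6].flatMap letterWord ++ [3, 7, 8, 4, 2, 3] ++
      spiderWord ++ [3, 7, 8, 4, 2, 3].reverse ++ [8] ++ spiderWord ++ [8]) = [] := by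
    decide +kernel
  have h := isCoxeterFamily_gen.wordProd_eq_one h
  simpa only [wordProd_append, hspider, mul_one, wordProd_reverse gen_mul_self,
    mul_inv_cancel_right, mul_assoc _ (gen 8), ← wordProd_letter, wordProd_cons gen 8 [],
    wordProd_nil, gen_mul_self] using h

theorem wordProd_letterRelators : ∀ w ∈ letterRelators, wordProd letter w = 1 := by
  have h : ∀ w ∈ letterRelators.dropLast, coxeterReduce diagram (w.flatMap letterWord) = [] := by
    decide +kernel
  intro w hw
  rw [← List.dropLast_concat_getLast (l := letterRelators) (by decide), List.mem_append,
    List.mem_singleton] at hw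
  obtain hw | rfl := hw
  · rw [wordProd_letter, isCoxeterFamily_gen.wordProd_eq_one (h w hw)]
  · exact wordProd_letter_four_five_six

end Letters

section Points

open Fi22PS

/-- The letters that permute the points, in the order in which they are tried in the search for the
conjugators that define the points. -/
def pointLetters : List ℕ := [1, 2, 4, 0, 3, 5, 6]

/-- The conjugates of `a` under the letters. The numbers below `22` index the points, of which
`a`, `c`, `e`, `g`, `h` are the first five. -/
def point (z : ℕ) : Gp :=
  (cosetRep pointStep pointLetters letter z)⁻¹ * gen 0 *
    cosetRep pointStep pointLetters letter z

theorem point_zero : point 0 = gen 0 := by simp [point, cosetRep_zero]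

theorem letter_seven : letter 7 = point 0 := by simp [letter, letterWord, point_zero]

theorem schreierGen_pointStep_mem_centralizer {z l : ℕ} (hz : z < 22) (hl : l < 7) :
    schreierGen pointStep pointLetters letter z l ∈ Subgroup.centralizer {gen 0} := by
  have hclosed : isClosedTable pointStep pointLetters 22 letterRelators
      [[1], [2], [3], [4], [6], [5, 6, 0, 6, 5]] 4 = true := by decide +kernel
  have hS : ∀ w ∈ [[1], [2], [3], [4], [6], [5, 6, 0, 6, 5]], coxeterReduce diagram
      (w.flatMap letterWord ++ [0] ++ (w.flatMap letterWord).reverse ++ [0].reverse) = [] := by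
    decide +kernel
  have hL : ∀ l < 7, l ∈ pointLetters := by decide
  have hbot : ∀ l, letter l ∈ Subgroup.normalizer ((⊥ : Subgroup Gp) : Set Gp) := fun l ↦ by
    rw [Subgroup.normalizer_eq_top]
    exact Subgroup.mem_top _
  refine (schreierGen_mem_of_isClosedTable letter_mul_self hbot ?_ bot_le ?_ hclosed hz
    (hL l hl)).2
  · exact fun w hw ↦ wordProd_letterRelators w hw
  · intro w hw
    rw [Subgroup.mem_centralizer_singleton_iff, wordProd_letter]
    simpa using (isCoxeterFamily_gen.commute_wordProd (hS w hw)).eq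

theorem conj_point {z l : ℕ} (hz : z < 22) (hl : l < 7) :
    (letter l)⁻¹ * point z * letter l = point (pointStep z l) := by
  have h := schreierGen_pointStep_mem_centralizer hz hl
  rw [Subgroup.mem_centralizer_singleton_iff, schreierGen] at h
  set r := cosetRep pointStep pointLetters letter z with hr
  set r' := cosetRep pointStep pointLetters letter (pointStep z l) with hr'
  calc (letter l)⁻¹ * point z * letter l
      = (letter l)⁻¹ * r⁻¹ * (gen 0 * (r * letter l * r'⁻¹)) * r' := by
        simp only [point, ← hr, mul_assoc, inv_mul_cancel, mul_one]
    _ = point (pointStep z l) := by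
        rw [← h]
        simp only [point, ← hr', mul_assoc, inv_mul_cancel_left]

theorem pointStep_lt_and_pointStep_pointStep {z : ℕ} (hz : z < 22) (l : ℕ) :
    pointStep z l < 22 ∧ pointStep (pointStep z l) l = z := by
  obtain hl | hl := lt_or_ge l 7
  · have h : ∀ z < 22, ∀ l < 7, pointStep z l < 22 ∧ pointStep (pointStep z l) l = z := by
      decide +kernel
    exact h z hz l hl
  · have h : ∀ z, pointStep z l = z := fun z ↦ by simp [pointStep, letterSwaps, hl]
    simp only [h, hz, true_and]

theorem foldl_pointStep_lt {w : List ℕ} {z : ℕ} (hz : z < 22) : w.foldl pointStep z < 22 :=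
  List.foldlRecOn (motive := (· < 22)) w pointStep hz fun _ h l _ ↦
    (pointStep_lt_and_pointStep_pointStep h l).1

theorem foldl_pointStep_inj {w : List ℕ} {z z' : ℕ} (hz : z < 22) (hz' : z' < 22)
    (h : w.foldl pointStep z = w.foldl pointStep z') : z = z' := by
  induction w generalizing z z' with
  | nil => exact h
  | cons l w ih =>
    obtain ⟨hlt, hinv⟩ := pointStep_lt_and_pointStep_pointStep hz l
    obtain ⟨hlt', hinv'⟩ := pointStep_lt_and_pointStep_pointStep hz' l
    rw [← hinv, ih hlt hlt' h, hinv']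

theorem conj_point_wordProd_of_forall {w : List ℕ}
    (hw : ∀ l ∈ w, ∀ z < 22, (letter l)⁻¹ * point z * letter l = point (pointStep z l)) {z : ℕ}
    (hz : z < 22) :
    (wordProd letter w)⁻¹ * point z * wordProd letter w = point (w.foldl pointStep z) := by
  induction w generalizing z with
  | nil => simp
  | cons l w ih =>
    rw [List.forall_mem_cons] at hw
    rw [List.foldl_cons, ← ih hw.2 (pointStep_lt_and_pointStep_pointStep hz l).1, ← hw.1 z hz]
    simp only [wordProd_cons, mul_inv_rev, mul_assoc]

theorem conj_point_wordProd {w : List ℕ} (hw : ∀ l ∈ w, l < 7) {z : ℕ} (hz : z < 22) :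
    (wordProd letter w)⁻¹ * point z * wordProd letter w = point (w.foldl pointStep z) :=
  conj_point_wordProd_of_forall (fun l hl _ hz ↦ conj_point hz (hw l hl)) hz

/-- Words that carry the point `0` to the points `0, …, 10`. -/
def pointPath (z : ℕ) : List ℕ :=
  [[], [0], [0, 1], [0, 1, 3], [0, 4], [0, 2], [5], [0, 2, 3], [5, 3], [5, 4],
    [0, 2, 3, 5]].getD z []

/-- Words in the generators for the points `0, …, 10`. -/
def pointWord (z : ℕ) : List ℕ :=
  ((pointPath z).reverse ++ [7] ++ pointPath z).flatMap letterWord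

theorem point_eq_wordProd {z : ℕ} (hz : z < 11) : point z = wordProd gen (pointWord z) := by
  have hpath : ∀ z < 11, (∀ l ∈ pointPath z, l < 7) ∧ (pointPath z).foldl pointStep 0 = z := by
    decide +kernel
  obtain ⟨hlt, hend⟩ := hpath z hz
  rw [pointWord, ← wordProd_letter, wordProd_append, wordProd_append,
    wordProd_reverse letter_mul_self, wordProd_cons, wordProd_nil, mul_one, letter_seven,
    conj_point_wordProd hlt (by simp), hend]

theorem wordProd_point {z : List ℕ} (hz : ∀ i ∈ z, i < 11) :
    wordProd point z = wordProd gen (z.flatMap pointWord) := by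
  rw [wordProd_flatMap, wordProd, wordProd,
    List.map_congr_left fun i hi ↦ point_eq_wordProd (hz i hi)]

theorem point_mul_self (z : ℕ) : point z * point z = 1 := by
  simp only [point, mul_assoc, mul_inv_cancel_left]
  rw [← mul_assoc (gen 0), gen_mul_self, one_mul, inv_mul_cancel]

/-- A condition for all points in `S` to be carried to `m` by words from `D`. -/
def Descends (D : List (List ℕ)) (S : List ℕ) (m : ℕ) : Prop :=
  ∀ z ∈ S, z = m ∨ ∃ w ∈ D, w.foldl pointStep z ∈ S ∧ w.foldl pointStep z < z

instance (D : List (List ℕ)) (S : List ℕ) (m : ℕ) : Decidable (Descends D S m) := by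
  unfold Descends
  infer_instance

theorem Descends.induction {D : List (List ℕ)} {S : List ℕ} {m : ℕ} (h : Descends D S m)
    {C : ℕ → Prop} (hm : C m) (hC : ∀ w ∈ D, ∀ z ∈ S, C (w.foldl pointStep z) → C z) :
    ∀ z ∈ S, C z := by
  intro z hz
  induction z using Nat.strong_induction_on with
  | _ z ih =>
    obtain rfl | ⟨w, hw, hmem, hlt⟩ := h z hz
    · exact hm
    · exact hC w hw z hz (ih _ hlt hmem)

/-- A base for the action of the letters `0, 1, 2, 3, 6` on the points: only the identity fixes
all its members. -/
def basePoints : List ℕ := [0, 1, 2, 4, 3]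

/-- Words that fix the first `k` base points. -/
def stabilizerWords (k : ℕ) : List (List ℕ) :=
  [[[0, 2], [6], [1, 3]],
    [[1], [2, 6], [3], [2], [0, 1, 6, 0]],
    [[3], [1, 6], [0, 6, 2, 3, 1, 2, 0], [0, 1, 0, 6, 0, 1, 3]],
    [[1, 6], [0, 1, 6, 0], [3, 1, 6, 3], [0, 1, 3, 1, 6, 3, 1, 0]],
    [[0, 3, 1, 2, 0, 3, 6, 0, 3, 1, 2, 0, 3, 6]]].getD k []

/-- The orbit of the base point number `k` under the words that fix the preceding ones. -/
def stabilizerOrbit (k : ℕ) : List ℕ :=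
  [List.range 22, List.range' 1 21, List.range' 2 20, List.range' 4 16, [3, 20, 21]].getD k []

theorem descends_stabilizerWords : ∀ k < 5,
    Descends (stabilizerWords k) (stabilizerOrbit k) (basePoints.getD k 0) := by
  decide +kernel

theorem lt_of_mem_stabilizerWords : ∀ k < 5, ∀ w ∈ stabilizerWords k, ∀ l ∈ w, l < 7 := by
  decide +kernel

theorem foldl_pointStep_of_mem_stabilizerWords : ∀ k < 5, ∀ w ∈ stabilizerWords k,
    ∀ z ∈ basePoints.take k, w.foldl pointStep z = z := by
  decide +kernel

theorem forall_point_point {C : Gp → Gp → Prop}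
    (hconj : ∀ k x y, C (k⁻¹ * x * k) (k⁻¹ * y * k) → C x y) (h : C (point 0) (point 1)) :
    ∀ z < 22, ∀ z' < 22, z ≠ z' → C (point z) (point z') := by
  have hword {k : ℕ} (hk : k < 5) {w : List ℕ} (hw : w ∈ stabilizerWords k) {z z' : ℕ}
      (hz : z < 22) (hz' : z' < 22)
      (hC : C (point (w.foldl pointStep z)) (point (w.foldl pointStep z'))) :
      C (point z) (point z') := by
    have hlt := lt_of_mem_stabilizerWords k hk w hw
    rw [← conj_point_wordProd hlt hz, ← conj_point_wordProd hlt hz'] at hC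
    exact hconj _ _ _ hC
  have hzero : ∀ z ∈ stabilizerOrbit 1, C (point 0) (point z) :=
    (descends_stabilizerWords 1 (by simp)).induction h fun w hw z hz hC ↦ by
      refine hword (k := 1) (by simp) hw (by simp) (List.mem_range'_1.mp hz).2 ?_
      rwa [foldl_pointStep_of_mem_stabilizerWords 1 (by simp) w hw 0 (by decide)]
  have hall : ∀ z ∈ stabilizerOrbit 0, ∀ z' < 22, z ≠ z' → C (point z) (point z') :=
    (descends_stabilizerWords 0 (by simp)).induction
      (fun z' hz' hne ↦ hzero z' (List.mem_range'_1.mpr ⟨Nat.pos_of_ne_zero hne.symm, hz'⟩))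
      fun w hw z hz ih z' hz' hne ↦ by
        have hz : z < 22 := List.mem_range.mp hz
        exact hword (k := 0) (by simp) hw hz hz' <| ih _ (foldl_pointStep_lt hz') fun h ↦
          hne (foldl_pointStep_inj hz hz' h)
  exact fun z hz ↦ hall z (List.mem_range.mpr hz)

theorem commute_point {z z' : ℕ} (hz : z < 22) (hz' : z' < 22) :
    Commute (point z) (point z') := by
  have h : coxeterReduce diagram
      (pointWord 0 ++ pointWord 1 ++ (pointWord 0).reverse ++ (pointWord 1).reverse) = [] := by
    decide +kernel
  have h := isCoxeterFamily_gen.commute_wordProd h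
  rw [← point_eq_wordProd (by simp), ← point_eq_wordProd (by simp)] at h
  obtain rfl | hne := eq_or_ne z z'
  · exact Commute.refl _
  · refine forall_point_point (C := Commute) (fun k x y hk ↦ ?_) h z hz z' hz' hne
    simpa using Commute.conj_iff k⁻¹ |>.mp (by simpa using hk)

/-- Seven points whose product is `(abcdefh)⁹` or `(bcdefgh)⁹`. -/
def heptad (b : Bool) : List ℕ := bif b then [1, 2, 3, 4, 5, 7, 10] else [0, 1, 2, 4, 5, 6, 9]

theorem wordProd_point_heptad (b : Bool) : wordProd point (heptad b) = 1 := by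
  let w := bif b then [1, 2, 3, 4, 5, 6, 7] else [0, 1, 2, 3, 4, 5, 7]
  have hw : (w, 9) ∈ relatorPowers := by revert b; decide
  have hlt : ∀ i ∈ heptad b, i < 11 := by revert b; decide
  have h : coxeterReduce diagram
      ((heptad b).flatMap pointWord ++ (List.replicate 9 w).flatten) = [] := by
    revert b; decide +kernel
  have h := isCoxeterFamily_gen.wordProd_eq_one h
  rwa [wordProd_append, wordProd_gen_flatten_replicate hw, mul_one, ← wordProd_point hlt] at h

theorem wordProd_point_map_foldl {w : List ℕ} (hw : ∀ l ∈ w, l < 7) {z : List ℕ}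
    (hz : ∀ i ∈ z, i < 22) (h : wordProd point z = 1) :
    wordProd point (z.map (w.foldl pointStep)) = 1 := by
  have hconj : wordProd point (z.map (w.foldl pointStep)) =
      MulAut.conj (wordProd letter w)⁻¹ (wordProd point z) := by
    rw [← MulEquiv.coe_toMonoidHom, map_wordProd, wordProd, wordProd, List.map_map]
    refine congrArg List.prod (List.map_congr_left fun i hi ↦ ?_)
    simp [conj_point_wordProd hw (hz i hi)]
  rw [hconj, h, map_one]

/-- The subgroup generated by the points, which turns out to be elementary abelian of order
`2 ^ 10`. -/
def pointGroup : Subgroup Gp := Subgroup.closure (point '' Set.Iio 22)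

theorem point_mem_pointGroup {z : ℕ} (hz : z < 22) : point z ∈ pointGroup :=
  Subgroup.subset_closure ⟨z, hz, rfl⟩

theorem letter_mem_normalizer_pointGroup (l : ℕ) :
    letter l ∈ Subgroup.normalizer (pointGroup : Set Gp) := by
  obtain hl | rfl | hl := lt_trichotomy l 7
  · refine Subgroup.normalizer_le_normalizer_closure _ ?_
    have hinvol : Function.Involutive (MulAut.conj (letter l)) := fun x ↦ by
      rw [← MulAut.mul_apply, ← map_mul, letter_mul_self, map_one, MulAut.one_apply]
    have hmaps : Set.MapsTo (MulAut.conj (letter l)) (point '' Set.Iio 22)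
        (point '' Set.Iio 22) := by
      rintro _ ⟨z, hz, rfl⟩
      refine ⟨pointStep z l, (pointStep_lt_and_pointStep_pointStep hz l).1, ?_⟩
      rw [← conj_point hz hl, MulAut.conj_apply, inv_eq_of_mul_eq_one_left (letter_mul_self l)]
    exact Subgroup.mem_normalizer_iff_conj_image_eq.mpr <|
      hmaps.image_subset.antisymm fun x hx ↦ ⟨_, hmaps hx, hinvol x⟩
  · exact Subgroup.le_normalizer (letter_seven ▸ point_mem_pointGroup (by simp))
  · have hletter : letter l = 1 := by simp [letter, letterWord, Nat.succ_le_of_lt hl]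
    exact hletter ▸ one_mem _

/-- Points that generate `pointGroup`. -/
def pointBasis : List ℕ := [0, 1, 2, 3, 5, 7, 13, 16, 17, 19]

theorem point_mem_closure_pointBasis {z : ℕ} (hz : z < 22) :
    point z ∈ Subgroup.closure {x | x ∈ pointBasis.map point} := by
  let conjugates : List (Bool × List ℕ) :=
    [(true, [0, 6, 3]), (true, []), (false, [3]), (false, [3, 6]), (true, [0, 6]), (false, []),
      (true, [0]), (false, [3, 1]), (false, [3, 1, 6]), (false, [3, 6, 4]), (false, [3, 6, 5]),
      (true, [0, 6, 4])]
  let relations := conjugates.map fun p ↦ (heptad p.1).map (p.2.foldl pointStep)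
  have hword : ∀ p ∈ conjugates, ∀ l ∈ p.2, l < 7 := by decide
  have hheptad : ∀ b, ∀ i ∈ heptad b, i < 22 := by decide
  have hrelations : ∀ w ∈ relations, wordProd point w = 1 := List.forall_mem_map.mpr fun p hp ↦
    wordProd_point_map_foldl (hword p hp) (hheptad p.1) (wordProd_point_heptad p.1)
  have hall : ∀ z < 22, z ∈ relations.foldl addMissing pointBasis := by decide +kernel
  exact forall_mem_foldl_addMissing hrelations
    (fun z hz ↦ Subgroup.subset_closure (List.mem_map_of_mem hz)) z (hall z hz)

theorem card_pointGroup_le : ENat.card pointGroup ≤ 2 ^ 10 := by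
  have hlt : ∀ z ∈ pointBasis, z < 22 := by decide
  have hle : pointGroup ≤ Subgroup.closure {x | x ∈ pointBasis.map point} :=
    (Subgroup.closure_le _).mpr (Set.image_subset_iff.mpr fun z hz ↦
      point_mem_closure_pointBasis hz)
  refine (ENat.card_le_card_of_injective (Subgroup.inclusion_injective hle)).trans
    (card_closure_le_two_pow _ ?_ ?_)
  · simp [point_mul_self]
  · simp only [List.forall_mem_map]
    exact fun z hz z' hz' ↦ commute_point (hlt z hz) (hlt z' hz')

end Points

section UpperBound

open Fi22PS

theorem conj_point_letter {z : ℕ} (hz : z < 22) (l : ℕ) :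
    (letter l)⁻¹ * point z * letter l = point (pointStep z l) := by
  obtain hl | hl := lt_or_ge l 7
  · exact conj_point hz hl
  · have hstep : pointStep z l = z := by simp [pointStep, letterSwaps, hl]
    obtain rfl | hl := hl.eq_or_lt
    · rw [hstep, letter_seven, mul_assoc, (commute_point hz (by simp)).eq, inv_mul_cancel_left]
    · have hletter : letter l = 1 := by simp [letter, letterWord, Nat.succ_le_of_lt hl]
      simp [hstep, hletter]

/-- Words that commute with `b`. Those for `false` and `true` carry the pair `0, 1` of points to
`1, 21` and to `21, 0`. -/
def centralizingWord (k : Bool) : List ℕ :=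
  bif k then [7, 5, 7, 3, 1, 6, 0, 2, 6] else [2, 3, 1, 0, 6, 0, 1, 7, 5, 7, 3]

theorem commute_centralizingWord (k : Bool) :
    Commute (gen 1) (wordProd letter (centralizingWord k)) := by
  have h : coxeterReduce diagram ([1] ++ (centralizingWord k).flatMap letterWord ++ [1].reverse ++
      ((centralizingWord k).flatMap letterWord).reverse) = [] := by
    revert k; decide +kernel
  simpa [wordProd_letter] using isCoxeterFamily_gen.commute_wordProd h

theorem point_eq_gen : ∀ p ∈ [(0, 0), (1, 2), (2, 4), (3, 6), (4, 7)], point p.1 = gen p.2 := by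
  have h : ∀ p ∈ [(0, 0), (1, 2), (2, 4), (3, 6), (4, 7)],
      p.1 < 11 ∧ coxeterReduce diagram (pointWord p.1) = [p.2] := by
    decide +kernel
  intro p hp
  rw [point_eq_wordProd (h p hp).1, ← isCoxeterFamily_gen.wordProd_coxeterReduce, (h p hp).2,
    wordProd_cons, wordProd_nil, mul_one]

theorem letter_zero : letter 0 = gen 1 * point 0 * point 1 * gen 1 := by
  simp [letter, letterWord, point_zero, point_eq_gen (1, 2) (by simp), mul_assoc]

theorem conj_letter_zero {w : List ℕ} (hw : Commute (gen 1) (wordProd letter w)) :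
    (wordProd letter w)⁻¹ * letter 0 * wordProd letter w =
      gen 1 * point (w.foldl pointStep 0) * point (w.foldl pointStep 1) * gen 1 := by
  have hconj {z : ℕ} (hz : z < 22) := conj_point_wordProd_of_forall
    (fun l _ z hz ↦ conj_point_letter hz l) (w := w) hz
  rw [← hconj (z := 0) (by simp), ← hconj (z := 1) (by simp), letter_zero]
  calc (wordProd letter w)⁻¹ * (gen 1 * point 0 * point 1 * gen 1) * wordProd letter w
      = (wordProd letter w)⁻¹ * gen 1 * point 0 * point 1 * (gen 1 * wordProd letter w) := by
        simp only [mul_assoc]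
    _ = gen 1 * (wordProd letter w)⁻¹ * point 0 * point 1 * (wordProd letter w * gen 1) := by
        rw [hw.inv_right.eq, hw.eq]
    _ = _ := by simp only [mul_assoc, mul_inv_cancel_left]

/-- The relator of the letters modulo the points that is not a consequence of `letterRelators`. -/
def extraRelator : List ℕ :=
  [0, 3, 5, 1, 0, 6, 0, 1, 3, 2, 0, 2, 3, 1, 0, 6, 0, 1, 5, 3, 6, 2, 0, 6, 1, 3, 5, 0, 5, 3, 1, 6,
    0, 2, 6]

theorem wordProd_extraRelator_mem : wordProd letter extraRelator ∈ pointGroup := by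
  let w := [0] ++ ((centralizingWord false).reverse ++ [0] ++ centralizingWord false) ++
    ((centralizingWord true).reverse ++ [0] ++ centralizingWord true)
  have hfilter : w.filter (· != 7) = extraRelator := by decide
  have hone : wordProd letter w = 1 := by
    have hfalse := conj_letter_zero (commute_centralizingWord false)
    have htrue := conj_letter_zero (commute_centralizingWord true)
    have hpath : (centralizingWord false).foldl pointStep 0 = 1 ∧
        (centralizingWord false).foldl pointStep 1 = 21 ∧
        (centralizingWord true).foldl pointStep 0 = 21 ∧
        (centralizingWord true).foldl pointStep 1 = 0 := by decide +kernel
    rw [hpath.1, hpath.2.1] at hfalse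
    rw [hpath.2.2.1, hpath.2.2.2] at htrue
    have hcancel {x : Gp} (hx : x * x = 1) (y : Gp) : x * (x * y) = y := by
      rw [← mul_assoc, hx, one_mul]
    simp only [w, wordProd_append, wordProd_reverse letter_mul_self, wordProd_cons, wordProd_nil,
      mul_one]
    rw [hfalse, htrue, letter_zero]
    simp only [mul_assoc, hcancel (gen_mul_self 1), hcancel (point_mul_self _), gen_mul_self]
  have hnormalizer : ∀ l, (l != 7) = true → letter l ∈ Subgroup.normalizer (pointGroup : Set Gp) :=
    fun l _ ↦ letter_mem_normalizer_pointGroup l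
  have hmem : ∀ l, (l != 7) = false → letter l ∈ pointGroup := fun l hl ↦ by
    obtain rfl : l = 7 := by simpa using hl
    exact letter_seven ▸ point_mem_pointGroup (by simp)
  have h := (wordProd_mem_iff_filter hnormalizer hmem w 1 (one_mem _)).mp
  rw [hfilter, hone, one_mul, one_mul] at h
  exact h (one_mem _)

/-- The extension of `pointGroup` by the letters in `L`. -/
def letterGroup (L : List ℕ) : Subgroup Gp := Subgroup.closure (pointGroup ∪ letter '' {l | l ∈ L})

theorem card_letterGroup_le {Q n passes : ℕ} {L L' : List ℕ} (hn : 0 < n)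
    (h : isClosedTable (tableEntry Q) L n (letterRelators ++ [extraRelator])
      (L'.map fun l ↦ [l]) passes = true) :
    ENat.card (letterGroup L) ≤ n * ENat.card (letterGroup L') := by
  refine card_closure_le_of_isClosedTable letter_mul_self letter_mem_normalizer_pointGroup ?_ hn h
  intro w hw
  rw [List.mem_append, List.mem_singleton] at hw
  obtain hw | rfl := hw
  · exact wordProd_letterRelators w hw ▸ one_mem _
  · exact wordProd_extraRelator_mem

theorem letter_eq_u_v_w_x : letter 0 = u ∧ letter 1 = v ∧ letter 2 = w ∧ letter 3 = x := by
  simp only [u, v, w, x, mul_assoc, letter, letterWord, List.getD_cons_zero, List.getD_cons_succ,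
    wordProd_cons, wordProd_nil, mul_one]
  exact ⟨rfl, rfl, rfl, rfl⟩

theorem y_mul_letter_one_mul_letter_two : y * letter 1 * letter 2 = 1 := by
  have h : coxeterReduce diagram ([3, 2, 7, 3] ++ letterWord 1 ++ letterWord 2) = [] := by
    decide +kernel
  have h := isCoxeterFamily_gen.wordProd_eq_one h
  have hy : y = wordProd gen [3, 2, 7, 3] := by
    simp only [y, mul_assoc, wordProd_cons, wordProd_nil, mul_one]
    rfl
  rwa [hy, letter, letter, ← wordProd_append, ← wordProd_append]

theorem t_mul_letter_six_mul_point_four_mul_point_five :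
    t * letter 6 * point 4 * point 5 = 1 := by
  have h : coxeterReduce diagram ((List.replicate 4 [2, 3, 4, 7, 8]).flatten ++ letterWord 6 ++
      pointWord 4 ++ pointWord 5) = [] := by decide +kernel
  have h := isCoxeterFamily_gen.wordProd_eq_one h
  have ht : t = wordProd gen [2, 3, 4, 7, 8] ^ 4 := by
    simp only [t, mul_assoc, wordProd_cons, wordProd_nil, mul_one]
    rfl
  rw [ht, letter, point_eq_wordProd (by simp), point_eq_wordProd (by simp)]
  simpa only [wordProd_append, wordProd_flatten_replicate] using h

theorem esub_le_letterGroup {L : List ℕ} (hL : ∀ l < 7, l ∈ L) : Esub ≤ letterGroup L := by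
  have hpoint {z : ℕ} (hz : z < 22) : point z ∈ letterGroup L :=
    Subgroup.subset_closure (Or.inl (point_mem_pointGroup hz))
  have hletter {l : ℕ} (hl : l < 7) : letter l ∈ letterGroup L :=
    Subgroup.subset_closure (Or.inr ⟨l, hL l hl, rfl⟩)
  have hgen : ∀ p ∈ [(0, 0), (1, 2), (2, 4), (3, 6), (4, 7)], gen p.2 ∈ letterGroup L := by
    have hlt : ∀ p ∈ [(0, 0), (1, 2), (2, 4), (3, 6), (4, 7)], p.1 < 22 := by decide
    exact fun p hp ↦ point_eq_gen p hp ▸ hpoint (hlt p hp)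
  have hy : y ∈ letterGroup L := by
    rw [← Subgroup.mul_mem_cancel_right _ (hletter (l := 1) (by simp)),
      ← Subgroup.mul_mem_cancel_right _ (hletter (l := 2) (by simp)),
      y_mul_letter_one_mul_letter_two]
    exact one_mem _
  have ht : t ∈ letterGroup L := by
    rw [← Subgroup.mul_mem_cancel_right _ (hletter (l := 6) (by simp)),
      ← Subgroup.mul_mem_cancel_right _ (hpoint (z := 4) (by simp)),
      ← Subgroup.mul_mem_cancel_right _ (hpoint (z := 5) (by simp)),
      t_mul_letter_six_mul_point_four_mul_point_five]
    exact one_mem _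
  obtain ⟨hu, hv, hw, hx⟩ := letter_eq_u_v_w_x
  refine (Subgroup.closure_le _).mpr ?_
  simp only [Set.insert_subset_iff, Set.singleton_subset_iff]
  exact ⟨hgen (0, 0) (by simp), hgen (1, 2) (by simp), hgen (2, 4) (by simp), hgen (3, 6) (by simp),
    hgen (4, 7) (by simp), hu ▸ hletter (by simp), hv ▸ hletter (by simp), hw ▸ hletter (by simp),
    hx ▸ hletter (by simp), hy, ht⟩

set_option maxRecDepth 100000 in
theorem isClosedTable_orbitTable_range_seven :
    isClosedTable (tableEntry (orbitTable (List.range 7) (2 ^ 22 - 2 ^ 14) 330))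
      [5, 4, 2, 3, 6, 1, 0] 330 (letterRelators ++ [extraRelator])
      ((List.range 6).map fun l ↦ [l]) 4 = true := by
  decide +kernel

set_option maxRecDepth 100000 in
theorem card_esub_le : ENat.card Esub ≤ 443520 * 2 ^ 10 := by
  have hnil : letterGroup [] = pointGroup := by simp [letterGroup]
  have h24 : ENat.card (letterGroup [1, 2, 3]) ≤ (24 : ℕ) * ENat.card pointGroup :=
    hnil ▸ card_letterGroup_le (Q := orbitTable [1, 2, 3] (2 ^ 1 + 2 ^ 6) 24) (passes := 1)
      (by simp) (by decide +kernel)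
  have h7 : ENat.card (letterGroup [1, 2, 3, 5]) ≤ (7 : ℕ) * ENat.card (letterGroup [1, 2, 3]) :=
    card_letterGroup_le (Q := orbitTable [1, 2, 3, 5] (2 ^ 0) 7) (passes := 1)
      (by simp) (by decide +kernel)
  have h8 : ENat.card (letterGroup (List.range 6)) ≤
      (8 : ℕ) * ENat.card (letterGroup [1, 2, 3, 5]) :=
    card_letterGroup_le (passes := 1)
      (Q := orbitTable (List.range 6) ([0, 6, 8, 9, 11, 12, 13].map (2 ^ ·)).sum 8)
      (by simp) (by decide +kernel)
  have h330 : ENat.card (letterGroup [5, 4, 2, 3, 6, 1, 0]) ≤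
      (330 : ℕ) * ENat.card (letterGroup (List.range 6)) :=
    card_letterGroup_le (by simp) isClosedTable_orbitTable_range_seven
  calc ENat.card Esub ≤ ENat.card (letterGroup [5, 4, 2, 3, 6, 1, 0]) :=
        ENat.card_le_card_of_injective
          (Subgroup.inclusion_injective (esub_le_letterGroup (by decide)))
    _ ≤ (330 : ℕ) * ((8 : ℕ) * ((7 : ℕ) * ((24 : ℕ) * 2 ^ 10))) := by
        refine h330.trans ?_
        gcongr
        refine h8.trans ?_
        gcongr
        refine h7.trans ?_
        gcongr
        refine h24.trans ?_
        gcongr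
        exact card_pointGroup_le
    _ = 443520 * 2 ^ 10 := by norm_num

end UpperBound

section Representation

/-- The class `l * e₀ + ∑ e_p - ∑ e_m` in the Picard lattice of a cubic surface, in coordinates
with respect to a basis `e₀, …, e₆` of signature `(1, 6)`. -/
def divisorClass (l : ℤ) (p m : List ℕ) : List ℤ :=
  l :: (List.range' 1 6).map fun k ↦ (p.count k : ℤ) - m.count k

/-- The intersection form on the Picard lattice. -/
def intersection (x y : List ℤ) : ℤ :=
  x.headD 0 * y.headD 0 - (List.zipWith (· * ·) x.tail y.tail).sum

/-- The classes of the 27 lines on a cubic surface. -/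
def lines : List (List ℤ) :=
  ((List.range' 1 6).map fun j ↦ divisorClass 0 [j] []) ++
    ((List.range' 1 6).map fun j ↦ divisorClass 2 [] ((List.range' 1 6).erase j)) ++
    ((List.range' 1 6).sublistsLen 2).map fun s ↦ divisorClass 1 [] s

/-- The exponents of `ω` in the matrix over the field `{0, 1, ω, ω²}` that maps a line `x` to
`ω ^ (m * p)` times its reflection `x + p * r`, where `p` is the intersection number of `x`
and `r`. The entry is `none` where the matrix vanishes. -/
def reflectionExponent (m : ℤ) (r x y : List ℤ) : Option ℤ :=
  let p := intersection x r
  if y = List.zipWith (fun a b ↦ a + p * b) x r then some (m * p) else none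

/-- The exponents of `ω` in the matrix that maps a line `x` to the sum of `x` and the lines skew to
it, conjugated by the diagonal matrix with the entries `ω ^ intersection x m`. -/
def skewExponent (m x y : List ℤ) : Option ℤ :=
  if x = y ∨ intersection x y = 0 then some (intersection y m - intersection x m) else none

/-- The exponents of `ω` in the matrix that represents the generator `gen k`. -/
def genExponent (k : ℕ) : List ℤ → List ℤ → Option ℤ :=
  match k with
  | 0 => skewExponent (divisorClass 1 [] [1])
  | 6 => skewExponent (divisorClass 0 [6] [])
  | 7 => reflectionExponent 0 (divisorClass 1 [] [1, 2, 3])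
  | 8 => reflectionExponent 1 (divisorClass 2 [] [1, 2, 3, 4, 5, 6])
  | k => reflectionExponent 0 (divisorClass 0 [k] [k + 1])

/-- The coordinates of `ω ^ p` with respect to the basis `1, ω`, as the bits of a number. -/
def omegaPow (p : ℤ) : ℕ := if p % 3 = 0 then 1 else if p % 3 = 1 then 2 else 3

/-- The matrix with the entries `ω ^ f x y`, packed as a matrix over the field with two elements
that acts on the coordinates with respect to the basis `1, ω`. -/
def packedMatrix (f : List ℤ → List ℤ → Option ℤ) : ℕ :=
  let row (x : List ℤ) (s : ℤ) : ℕ :=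
    lines.foldr (fun y v ↦ (v <<< 2) ||| (f x y).elim 0 fun p ↦ omegaPow (p + s)) 0
  lines.foldr (fun x P ↦ (P <<< 108) ||| (row x 1 <<< 54) ||| row x 0) 0

/-- The packed matrix of the scalar `ω ^ m`. -/
def scalarMatrix (m : ℕ) : ℕ := packedMatrix fun x y ↦ if x = y then some (m : ℤ) else none

/-- The packed matrix that represents the generator `gen k` for `k < 9`. -/
def genMatrix (k : ℕ) : ℕ := packedMatrix (genExponent k)

/-- The packed matrix that represents a word in the generators. -/
def wordMatrix (w : List ℕ) : ℕ :=
  strictFoldl (fun A k ↦ force (genMatrix k) fun B ↦ packedMul 54 A B 54) w (scalarMatrix 0)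

theorem unpack_scalarMatrix_zero : unpack 54 (scalarMatrix 0) = 1 := by
  have h : ∀ i < 54, ∀ j < 54, bitAt (scalarMatrix 0) (54 * i + j) = Nat.beq i j := by
    decide +kernel
  ext i j
  rw [unpack, Matrix.of_apply, ← bitAt_eq_testBit, h i i.2 j j.2, Matrix.one_apply]
  simp [Fin.ext_iff]

theorem unpack_genMatrix_mul_self {k : ℕ} (hk : k < 9) :
    unpack 54 (genMatrix k) * unpack 54 (genMatrix k) = 1 := by
  have h : ∀ k < 9, (force (genMatrix k) fun B ↦ packedMul 54 B B 54) = scalarMatrix 0 := by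
    decide +kernel
  rw [← unpack_packedMul, ← unpack_scalarMatrix_zero, ← h k hk, force_eq]

theorem commute_unpack_scalarMatrix {m k : ℕ} (hm : m < 3) (hk : k < 9) :
    Commute (unpack 54 (scalarMatrix m)) (unpack 54 (genMatrix k)) := by
  have h : ∀ m < 3, ∀ k < 9, (force (scalarMatrix m) fun Z ↦ force (genMatrix k) fun B ↦
      packedMul 54 Z B 54) = force (scalarMatrix m) fun Z ↦ force (genMatrix k) fun B ↦
      packedMul 54 B Z 54 := by
    decide +kernel
  simpa only [Commute, SemiconjBy, force_eq, unpack_packedMul] using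
    congrArg (unpack 54) (h m hm k hk)

theorem wordMatrix_of_mem_relatorPowers : ∀ p ∈ relatorPowers,
    ∃ m < 3, wordMatrix (List.replicate p.2 p.1).flatten = scalarMatrix m := by
  decide +kernel

/-- The representation of the free group by matrices of size 27 over the field with four elements,
regarded as matrices of size 54 over the field with two elements. -/
def matrixRep : FreeGroup (Fin 9) →* (Matrix (Fin 54) (Fin 54) (ZMod 2))ˣ :=
  FreeGroup.lift fun k ↦ ⟨unpack 54 (genMatrix k), unpack 54 (genMatrix k),
    unpack_genMatrix_mul_self k.2, unpack_genMatrix_mul_self k.2⟩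

theorem coe_matrixRep_freeGen {k : ℕ} (hk : k < 9) :
    (matrixRep (freeGen k) : Matrix (Fin 54) (Fin 54) (ZMod 2)) = unpack 54 (genMatrix k) := by
  simp [freeGen, hk, matrixRep]

theorem coe_matrixRep_wordProd {w : List ℕ} (hw : ∀ k ∈ w, k < 9) :
    (matrixRep (wordProd freeGen w) : Matrix (Fin 54) (Fin 54) (ZMod 2)) =
      unpack 54 (wordMatrix w) := by
  suffices h : ∀ K, unpack 54 (strictFoldl
      (fun A k ↦ force (genMatrix k) fun B ↦ packedMul 54 A B 54) w K) =
        unpack 54 K * matrixRep (wordProd freeGen w) by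
    rw [wordMatrix, h, unpack_scalarMatrix_zero, one_mul]
  induction w with
  | nil => simp [strictFoldl]
  | cons k w ih =>
    obtain ⟨hk, hw⟩ := List.forall_mem_cons.mp hw
    intro K
    rw [strictFoldl, force_eq, ih hw, force_eq, unpack_packedMul, wordProd_cons, map_mul,
      Units.val_mul, coe_matrixRep_freeGen hk, mul_assoc]

theorem commute_matrixRep_of_mem_rels {r : FreeGroup (Fin 9)} (hr : r ∈ Fi22PS.rels) (k : Fin 9) :
    Commute (matrixRep r) (matrixRep (.of k)) := by
  obtain ⟨⟨w, n⟩, hp, rfl⟩ := mem_rels_iff.mp hr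
  obtain ⟨m, hm, hscalar⟩ := wordMatrix_of_mem_relatorPowers _ hp
  have hw : ∀ p ∈ relatorPowers, ∀ k ∈ p.1, k < 9 := by decide
  have hflat : ∀ k ∈ (List.replicate n w).flatten, k < 9 := by
    simpa using fun k _ ↦ hw _ hp k
  have hof : FreeGroup.of k = freeGen k := by simp [freeGen]
  refine Units.ext ?_
  rw [← wordProd_flatten_replicate, hof, Units.val_mul, Units.val_mul,
    coe_matrixRep_wordProd hflat, coe_matrixRep_freeGen k.2, hscalar]
  exact commute_unpack_scalarMatrix hm k.2

theorem gen_zero_ne_gen_two : gen 0 ≠ gen 2 := by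
  intro hgen
  have hmk : PresentedGroup.mk Fi22PS.rels (wordProd freeGen [0, 2]) = 1 := by
    rw [map_wordProd]
    change wordProd gen [0, 2] = 1
    simp [hgen, gen_mul_self]
  have hcomm := commute_of_presentedGroup_mk_eq_one
    (fun _ hr ↦ commute_matrixRep_of_mem_rels hr) hmk (freeGen 1)
  have hunpack : unpack 54 (wordMatrix [0, 2, 1]) = unpack 54 (wordMatrix [1, 0, 2]) := by
    rw [← coe_matrixRep_wordProd (by decide), ← coe_matrixRep_wordProd (by decide)]
    simpa [mul_assoc] using congrArg Units.val hcomm.eq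
  have hentry := congrFun₂ hunpack 0 0
  revert hentry
  simp only [unpack, Matrix.of_apply, ← bitAt_eq_testBit]
  decide +kernel

end Representation

section LowerBound

open Fi22PS

theorem point_inj {z z' : ℕ} (hz : z < 22) (hz' : z' < 22) (h : point z = point z') : z = z' := by
  have h01 : point 0 ≠ point 1 := by
    rw [point_zero, point_eq_gen (1, 2) (by simp)]
    exact gen_zero_ne_gen_two
  by_contra hne
  exact forall_point_point (C := (· ≠ ·)) (fun _ _ _ hk hxy ↦ hk (by rw [hxy])) h01 z hz z' hz' hne
    h

theorem commute_wordProd_point_iff {w : List ℕ} (hw : ∀ l ∈ w, l < 7) {z : ℕ} (hz : z < 22) :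
    Commute (wordProd letter w) (point z) ↔ w.foldl pointStep z = z := by
  have hconj := conj_point_wordProd hw hz
  rw [mul_assoc, inv_mul_eq_iff_eq_mul] at hconj
  rw [commute_iff_eq, eq_comm, hconj, mul_right_inj]
  exact ⟨point_inj (foldl_pointStep_lt hz) hz, congrArg point⟩

theorem letter_mem_esub : ∀ l ∈ [0, 1, 2, 3, 6], letter l ∈ Esub := by
  have hsubset : {a, c, e, g, h, u, v, w, x, y, t} ⊆ (Esub : Set Gp) := Subgroup.subset_closure
  simp only [Set.insert_subset_iff, Set.singleton_subset_iff, SetLike.mem_coe] at hsubset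
  obtain ⟨ha, -, -, -, hh, hu, hv, hw, hx, -, ht⟩ := hsubset
  obtain ⟨hlu, hlv, hlw, hlx⟩ := letter_eq_u_v_w_x
  have h4 : point 4 ∈ Esub := point_eq_gen (4, 7) (by simp) ▸ hh
  have h5 : point 5 ∈ Esub := by
    have hpath : point 5 = (wordProd letter [0, 2])⁻¹ * point 0 * wordProd letter [0, 2] :=
      (conj_point_wordProd (w := [0, 2]) (z := 0) (by simp) (by simp)).symm
    have hword : wordProd letter [0, 2] ∈ Esub :=
      wordProd_mem _ (by simp [hlu, hlw, hu, hw])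
    rw [hpath, point_zero]
    exact mul_mem (mul_mem (inv_mem hword) ha) hword
  have h6 : letter 6 ∈ Esub := by
    rw [← Subgroup.mul_mem_cancel_left _ ht, ← Subgroup.mul_mem_cancel_right _ h4,
      ← Subgroup.mul_mem_cancel_right _ h5, t_mul_letter_six_mul_point_four_mul_point_five]
    exact one_mem _
  simpa [hlu, hlv, hlw, hlx] using ⟨hu, hv, hw, hx, h6⟩

theorem mem_of_mem_stabilizerWords : ∀ k < 5, ∀ w ∈ stabilizerWords k, ∀ l ∈ w,
    l ∈ [0, 1, 2, 3, 6] := by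
  decide

theorem wordProd_mem_esub {k : ℕ} (hk : k < 5) {w : List ℕ} (hw : w ∈ stabilizerWords k) :
    wordProd letter w ∈ Esub :=
  wordProd_mem _ fun l hl ↦ letter_mem_esub l (mem_of_mem_stabilizerWords k hk w hw l hl)

theorem pointGroup_le_esub : pointGroup ≤ Esub := by
  refine (Subgroup.closure_le _).mpr (Set.image_subset_iff.mpr fun z hz ↦ ?_)
  refine (descends_stabilizerWords 0 (by simp)).induction (C := fun z ↦ point z ∈ Esub) ?_ ?_ z
    (List.mem_range.mpr hz)
  · exact point_zero ▸ Subgroup.subset_closure (Set.mem_insert _ _)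
  · intro w hw z hz hmem
    have hword := wordProd_mem_esub (by simp) hw
    rwa [← conj_point_wordProd (lt_of_mem_stabilizerWords 0 (by simp) w hw) (List.mem_range.mp hz),
      Subgroup.mul_mem_cancel_right _ hword,
      Subgroup.mul_mem_cancel_left _ (inv_mem hword)] at hmem

theorem isMulCommutative_pointGroup : IsMulCommutative pointGroup := by
  refine Subgroup.isMulCommutative_closure ?_
  rintro _ ⟨z, hz, rfl⟩ _ ⟨z', hz', rfl⟩
  exact (commute_point hz hz').eq

/-- The pointwise stabilizer in `Esub` of the first `k` base points. -/
def pointStabilizer (k : ℕ) : Subgroup Gp :=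
  Esub ⊓ Subgroup.centralizer {x | x ∈ (basePoints.take k).map point}

theorem pointStabilizer_succ {k : ℕ} (hk : k < 5) :
    pointStabilizer (k + 1) =
      pointStabilizer k ⊓ Subgroup.centralizer {point (basePoints.getD k 0)} := by
  have htake : ∀ k < 5, basePoints.take (k + 1) = basePoints.take k ++ [basePoints.getD k 0] := by
    decide
  ext y
  simp only [pointStabilizer, htake k hk, Subgroup.mem_inf, Subgroup.mem_centralizer_iff,
    List.map_append, List.map_singleton, List.mem_append, List.mem_singleton, Set.mem_ofPred_eq,
    Set.mem_singleton_iff, or_imp, forall_and, and_assoc]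

theorem wordProd_mem_pointStabilizer {k : ℕ} (hk : k < 5) {w : List ℕ}
    (hw : w ∈ stabilizerWords k) : wordProd letter w ∈ pointStabilizer k := by
  refine ⟨wordProd_mem_esub hk hw, Subgroup.mem_centralizer_iff.mpr ?_⟩
  have hlt : ∀ z ∈ basePoints, z < 22 := by decide
  refine List.forall_mem_map.mpr fun z hz ↦ ?_
  refine ((commute_wordProd_point_iff (lt_of_mem_stabilizerWords k hk w hw)
    (hlt z (List.mem_of_mem_take hz))).mpr ?_).eq.symm
  exact foldl_pointStep_of_mem_stabilizerWords k hk w hw z hz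

theorem exists_conj_point_eq {k : ℕ} (hk : k < 5) : ∀ z ∈ stabilizerOrbit k,
    ∃ y ∈ pointStabilizer k, y * point (basePoints.getD k 0) * y⁻¹ = point z := by
  have hlt : ∀ k < 5, ∀ z ∈ stabilizerOrbit k, z < 22 := by decide
  refine (descends_stabilizerWords k hk).induction ⟨1, one_mem _, by simp⟩ ?_
  rintro w hw z hz ⟨y, hy, hconj⟩
  refine ⟨wordProd letter w * y, mul_mem (wordProd_mem_pointStabilizer hk hw) hy, ?_⟩
  rw [← conj_point_wordProd (lt_of_mem_stabilizerWords k hk w hw) (hlt k hk z hz)] at hconj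
  calc wordProd letter w * y * point (basePoints.getD k 0) * (wordProd letter w * y)⁻¹
      = wordProd letter w * (y * point (basePoints.getD k 0) * y⁻¹) * (wordProd letter w)⁻¹ := by
        group
    _ = point z := by
        rw [hconj]
        group

theorem finite_esub : Finite Esub :=
  ENat.card_lt_top.mp (card_esub_le.trans_lt (ENat.natCast_lt_top (443520 * 2 ^ 10)))

theorem length_stabilizerOrbit_mul_card_pointStabilizer_le {k : ℕ} (hk : k < 5) :
    (stabilizerOrbit k).length * Nat.card (pointStabilizer (k + 1)) ≤
      Nat.card (pointStabilizer k) := by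
  classical
  have := finite_esub
  have : Finite (pointStabilizer k) := Finite.Set.subset (Esub : Set Gp) inf_le_left
  have horbit : ∀ k < 5, (stabilizerOrbit k).Nodup ∧ ∀ z ∈ stabilizerOrbit k, z < 22 := by decide
  obtain ⟨hnodup, hlt⟩ := horbit k hk
  have hinj : Set.InjOn point (stabilizerOrbit k).toFinset := by
    intro z hz z' hz'
    rw [Finset.mem_coe, List.mem_toFinset] at hz hz'
    exact point_inj (hlt z hz) (hlt z' hz')
  rw [← List.toFinset_card_of_nodup hnodup, ← Finset.card_image_of_injOn hinj,
    pointStabilizer_succ hk]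
  refine card_mul_card_inf_centralizer_le ?_
  simpa [Finset.forall_mem_image] using exists_conj_point_eq hk

theorem wordProd_mem_centralizer_pointGroup_iff {w : List ℕ} (hw : ∀ l ∈ w, l < 7) :
    wordProd letter w ∈ Subgroup.centralizer (pointGroup : Set Gp) ↔
      ∀ z < 22, w.foldl pointStep z = z := by
  rw [pointGroup, Subgroup.centralizer_closure, Subgroup.mem_centralizer_iff, Set.forall_mem_image]
  refine forall₂_congr fun z hz ↦ ?_
  rw [← commute_wordProd_point_iff hw hz, commute_iff_eq, eq_comm]

theorem isPGroup_pointGroup : IsPGroup 2 pointGroup := by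
  refine isPGroup_closure ?_ ?_
  · rintro _ ⟨z, hz, rfl⟩ _ ⟨z', hz', rfl⟩
    exact commute_point hz hz'
  · rintro _ ⟨z, -, rfl⟩
    rw [sq, point_mul_self]

theorem two_pow_le_card_pointGroup : 2 ^ 10 ≤ Nat.card pointGroup := by
  have horder : orderOf ((2 : ℕ) : ZMod 11) = 10 := (orderOf_eq_iff (by simp)).mpr (by decide)
  have := finite_esub
  have : Finite pointGroup := Finite.Set.subset (Esub : Set Gp) pointGroup_le_esub
  have : Fact (Nat.Prime 11) := ⟨by norm_num⟩
  let y : Subgroup.normalizer (pointGroup : Set Gp) :=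
    ⟨wordProd letter [0, 2, 3, 6], wordProd_mem _ fun l _ ↦ letter_mem_normalizer_pointGroup l⟩
  have hker (y : Subgroup.normalizer (pointGroup : Set Gp)) :
      pointGroup.normalizerMonoidHom y = 1 ↔ y.1 ∈ Subgroup.centralizer (pointGroup : Set Gp) := by
    rw [← MonoidHom.mem_ker, Subgroup.normalizerMonoidHom_ker, Subgroup.mem_subgroupOf]
  have hpow : pointGroup.normalizerMonoidHom y ^ 11 = 1 := by
    rw [← map_pow, hker, Subgroup.coe_pow, ← wordProd_flatten_replicate,
      wordProd_mem_centralizer_pointGroup_iff (by decide)]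
    decide +kernel
  have hne : pointGroup.normalizerMonoidHom y ≠ 1 := by
    rw [Ne, hker, wordProd_mem_centralizer_pointGroup_iff (by decide)]
    decide +kernel
  exact horder ▸ pow_orderOf_le_card isPGroup_pointGroup hpow hne

theorem pointGroup_le_pointStabilizer (k : ℕ) : pointGroup ≤ pointStabilizer k := by
  have hlt : ∀ z ∈ basePoints, z < 22 := by decide
  refine le_inf pointGroup_le_esub ?_
  refine (Subgroup.le_centralizer_iff_isMulCommutative.mpr isMulCommutative_pointGroup).trans
    (Subgroup.centralizer_le ?_)
  exact List.forall_mem_map.mpr fun z hz ↦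
    point_mem_pointGroup (hlt z (List.mem_of_mem_take hz))

theorem pointStabilizer_zero : pointStabilizer 0 = Esub :=
  inf_eq_left.mpr fun _ _ ↦ Subgroup.mem_centralizer_iff.mpr (by simp)

theorem le_card_esub : 443520 * 2 ^ 10 ≤ Nat.card Esub := by
  have := finite_esub
  have : Finite (pointStabilizer 5) := Finite.Set.subset (Esub : Set Gp) inf_le_left
  have hpointGroup := two_pow_le_card_pointGroup.trans
    (Subgroup.card_le_of_le (pointGroup_le_pointStabilizer 5))
  have h0 : 22 * _ ≤ _ := length_stabilizerOrbit_mul_card_pointStabilizer_le (k := 0) (by simp)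
  have h1 : 21 * _ ≤ _ := length_stabilizerOrbit_mul_card_pointStabilizer_le (k := 1) (by simp)
  have h2 : 20 * _ ≤ _ := length_stabilizerOrbit_mul_card_pointStabilizer_le (k := 2) (by simp)
  have h3 : 16 * _ ≤ _ := length_stabilizerOrbit_mul_card_pointStabilizer_le (k := 3) (by simp)
  have h4 : 3 * _ ≤ _ := length_stabilizerOrbit_mul_card_pointStabilizer_le (k := 4) (by simp)
  rw [pointStabilizer_zero] at h0
  lia

end LowerBound

end Fi22E

namespace Fi22PS

/-- In `G ≅ Fi₂₂`, the subgroup `E = ⟨a, c, e, g, h, u, v, w, x, y, t⟩` has order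
`2^17·3^2·5·7·11 = 454164480`. -/
theorem fi22_subgroup_E_card :
    Nat.card ↥Esub = 2 ^ 17 * 3 ^ 2 * 5 * 7 * 11 := by
  have := Fi22E.finite_esub
  have hle : Nat.card Esub ≤ 443520 * 2 ^ 10 := by
    have h := Fi22E.card_esub_le
    rw [ENat.card_eq_coe_natCard] at h
    exact_mod_cast h
  rw [hle.antisymm Fi22E.le_card_esub]
  norm_num

end Fi22PS
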